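/- arXiv:1310.3546 — 2 statements merged into one kernel-verified Lean document; each statement's English description precedes it below -/
import Mathlib

section
/- For an s,t-graded count: the multiplicity of the irreducible S_n-representation σ_λ in S_t(E_n) ⊗ Λ_s(E_n), where E_n = ℂ^n is the permutation representation, equals t^{n(λ)} Π_{(i,j)∈λ} (1 + s·t^{c(i,j)}) / Π_{(i,j)∈λ} (1 - t^{h(i,j)}), where c(i,j)=j-i is the content and h(i,j) the hook length of box (i,j), and n(λ)=Σ(i-1)λ_i. -/
set_option maxHeartbeats 1000000
set_option synthInstance.maxHeartbeats 400000

/-!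
STATEMENT 6: the graded multiplicity of the irreducible `S_n`-representation `σ_λ`
in `S_t(E_n) ⊗ Λ_s(E_n)`, where `E_n = ℂ^n` is the permutation representation —
i.e. `g_λ(t,s) = (1/n!) Σ_w χ_λ(w) det(1+s·w)/det(1-t·w)` — equals
`t^{n(λ)} Π_{(i,j)∈λ} (1 + s·t^{c(i,j)}) / Π_{(i,j)∈λ} (1 - t^{h(i,j)})`.
-/

open scoped BigOperators Classical

noncomputable section

/-- the multiset of fiber sizes of `f : Fin n → ℕ` (over the image of `f`). -/
def fiberSizes (n : ℕ) (f : Fin n → ℕ) : Multiset ℕ :=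
  (Finset.univ.image f).val.map (fun j => (Finset.univ.filter (fun i => f i = j)).card)

/-- the Young subgroup of `S_n` preserving the fibers of `f`. -/
def youngSubgroup (n : ℕ) (f : Fin n → ℕ) : Subgroup (Equiv.Perm (Fin n)) where
  carrier := {w | ∀ i, f (w i) = f i}
  one_mem' := by intro i; rfl
  mul_mem' := by
    intro a b ha hb i
    simpa [Equiv.Perm.mul_apply] using (ha (b i)).trans (hb i)
  inv_mem' := by
    intro a ha i
    simpa using (ha (a⁻¹ i)).symm

/-- the function on `G` induced from `φ` on the subgroup `H`. -/
def indCF {G : Type} [Group G] [Fintype G] (H : Subgroup G) (φ : G → ℚ) : G → ℚ :=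
  fun w => ((Nat.card H : ℚ))⁻¹ *
    ∑ g : G, if g⁻¹ * w * g ∈ H then φ (g⁻¹ * w * g) else 0

/-- the standard character pairing on `S_n` (characters here are real valued). -/
def pairS (n : ℕ) (a b : Equiv.Perm (Fin n) → ℚ) : ℚ :=
  ((n.factorial : ℚ))⁻¹ * ∑ w : Equiv.Perm (Fin n), a w * b w

/-- the multiset of parts of the conjugate (transposed) partition. -/
def conjParts (n : ℕ) (m : Multiset ℕ) : Multiset ℕ :=
  ((Finset.range n).val.map (fun j => Multiset.card (m.filter (fun a => j < a)))).filter
    (fun a => 0 < a)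

/-- `χ` is (the character of) the irreducible representation `σ_λ` of `S_n` attached to
the partition with parts `lam` and conjugate-partition parts `lamT`: it is a genuine
character, has norm one (so is irreducible), and is a common constituent of
`Ind_{S_λ} 1` and `Ind_{S_{λᵗ}} sgn` — which characterizes `σ_λ`. -/
def IsIrrCharOf (n : ℕ) (lam lamT : Multiset ℕ) (χ : Equiv.Perm (Fin n) → ℤ) : Prop :=
  (∃ V : FDRep ℂ (Equiv.Perm (Fin n)), ∀ g, V.character g = (χ g : ℂ)) ∧
  pairS n (fun w => (χ w : ℚ)) (fun w => (χ w : ℚ)) = 1 ∧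
  (∀ f : Fin n → ℕ, fiberSizes n f = lam →
      pairS n (fun w => (χ w : ℚ)) (indCF (youngSubgroup n f) (fun _ => 1)) ≠ 0) ∧
  (∀ f : Fin n → ℕ, fiberSizes n f = lamT →
      pairS n (fun w => (χ w : ℚ))
        (indCF (youngSubgroup n f) (fun w => ((Equiv.Perm.sign w : ℤ) : ℚ))) ≠ 0)

/-- the field `ℚ(t,s)` of rational functions in two variables. -/
abbrev F : Type := RatFunc (RatFunc ℚ)

/-- the variable `t`. -/
def tt : F := RatFunc.C (RatFunc.X : RatFunc ℚ)

/-- the variable `s`. -/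
def ss : F := RatFunc.X

/-- the permutation matrix of `w` on the permutation representation `E_n`. -/
def permM (n : ℕ) (w : Equiv.Perm (Fin n)) : Matrix (Fin n) (Fin n) F :=
  Matrix.of fun i j => if w j = i then 1 else 0

/-- the hook length `h(i,j)` of the box `c = (i,j)` of `μ` (0-indexed). -/
def hookLen (μ : YoungDiagram) (c : ℕ × ℕ) : ℕ :=
  μ.rowLen c.1 + μ.colLen c.2 - c.1 - c.2 - 1

/-- the content `c(i,j) = j - i` of a box (0-indexed). -/
def content (c : ℕ × ℕ) : ℤ := (c.2 : ℤ) - (c.1 : ℤ)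

/-- `n(λ) = Σ_i (i-1) λ_i = Σ_{(i,j)∈λ} i` (0-indexed rows). -/
def nInv (μ : YoungDiagram) : ℕ := ∑ c ∈ μ.cells, c.1

/-!
Molien's argument turns the multiplicity into an average of `χ(w) det(1 + s w) / det(1 - t w)`, a
polynomial in `s`, so it suffices to take `s = -t ^ N` for infinitely many `N`. There the ratio of
determinants is the power sum `p_w(1, t, …, t ^ (N - 1))`, since both are products over the cycles
of `w`, and `p_w` counts the colourings of the points by `N` colours that `w` preserves.

If `χ` is the coefficient of `x ^ (λ + δ)` in `∏_{i<j} (x_j - x_i) p_w(x)`, as in Frobenius'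
formula, then the Cauchy determinant evaluates `∑_w χ(w) p_w(y) ∏_{i<j} (y_j - y_i)` to `n!` times
the alternant `det (y_i ^ (λ + δ)_j)`. At `y_i = t ^ i` the alternant is a Vandermonde determinant
in the `t ^ (λ + δ)_j`, and the hook lengths of row `j` together with the differences of the
`j`-th beta number and the smaller ones exhaust `1, …, (λ + δ)_j`.

That `χ` is Frobenius' character follows from norms: the Cauchy determinant also gives the latter
squared norm `n!`, so it suffices that its pairing with `χ` is at least `n!`. The pairing is an
alternating sum over `σ ∈ S_N` of sums of `χ` over Young subgroups. A Young subgroup with non-zero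
sum has, by Schur's lemma, a double coset compatible with the columns of `λ`, and the resulting
dominance inequality forces `σ = 1`; the remaining sums are positive multiples of the orders of
the subgroups because they count invariant vectors.
-/

section PowerSum

/-- The set of cycles of a permutation, fixed points included. -/
abbrev CycleQuotient {α : Type*} (w : Equiv.Perm α) : Type _ :=
  Quotient (Equiv.Perm.SameCycle.setoid w)

theorem cycleQuotient_mk_apply {α : Type*} (w : Equiv.Perm α) (i : α) :
    (⟦w i⟧ : CycleQuotient w) = ⟦i⟧ :=
  Quotient.sound (Equiv.Perm.sameCycle_apply_left.2 (Equiv.Perm.SameCycle.refl w i))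

/-- The length of a cycle of `w`. -/
def cycleLength {α : Type*} [Fintype α] (w : Equiv.Perm α) (o : CycleQuotient w) : ℕ :=
  Fintype.card {i // (⟦i⟧ : CycleQuotient w) = o}

theorem cycleLength_pos {α : Type*} [Fintype α] (w : Equiv.Perm α) (o : CycleQuotient w) :
    0 < cycleLength w o := by
  obtain ⟨i, hi⟩ := Quotient.exists_rep o
  exact Fintype.card_pos_iff.2 ⟨⟨i, hi⟩⟩

theorem apply_eq_of_sameCycle {α A : Type*} [Finite α] {w : Equiv.Perm α} {f : α → A}
    (hf : f ∘ w = f) {i j : α} (hij : w.SameCycle i j) : f i = f j := by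
  obtain ⟨k, -, hk⟩ := hij.exists_pow_eq'
  rw [← hk, Equiv.Perm.coe_pow]
  have hsemi : Function.Semiconj f w id := congrFun hf
  simpa using (hsemi.iterate_right k i).symm

theorem eq_one_or_eq_of_forall_apply_eq_or {α : Type*} [Finite α] [Nontrivial α]
    {w σ : Equiv.Perm α} (hw : ∀ i j, w.SameCycle i j)
    (hσ : ∀ i, σ i = i ∨ σ i = w i) : σ = 1 ∨ σ = w := by
  refine or_iff_not_imp_left.2 fun hσ1 => ?_
  obtain ⟨i, hi⟩ : ∃ i, σ i ≠ i := by
    by_contra! h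
    exact hσ1 (Equiv.ext h)
  have agree_on_orbit (k : ℕ) : σ ((w ^ k) i) = w ((w ^ k) i) := by
    induction k with
    | zero => exact (hσ i).resolve_left hi
    | succ k ih =>
      refine (hσ _).resolve_left fun h => ?_
      rw [pow_succ', Equiv.Perm.mul_apply, ← ih] at h
      have hfix : w ((w ^ k) i) = (w ^ k) i := ih.symm.trans (σ.injective h)
      obtain ⟨j, hj⟩ := exists_ne ((w ^ k) i)
      obtain ⟨m, hm⟩ := hw ((w ^ k) i) j
      exact hj (hm ▸ Equiv.Perm.zpow_apply_eq_self_of_apply_eq_self hfix m)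
  ext j
  obtain ⟨k, -, rfl⟩ := (hw i j).exists_pow_eq'
  exact agree_on_orbit k

variable {α : Type*} [Fintype α] [DecidableEq α]

/-- The power-sum symmetric function of the cycle type of `w`, evaluated at `z`, that is
`∏ₒ ∑ₐ z a ^ |o|` over the cycles `o` of `w`. It is encoded as the sum over all colourings
constant on the cycles of `w`, which is also the trace of `w ∘ diag(z)^{⊗α}`. -/
def powerSum {A R : Type*} [Fintype A] [CommSemiring R] (w : Equiv.Perm α) (z : A → R) : R :=
  ∑ f : α → A with f ∘ w = f, ∏ i, z (f i)

theorem powerSum_eq_prod_cycles {A R : Type*} [Fintype A] [CommSemiring R] (w : Equiv.Perm α)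
    (z : A → R) : powerSum w z = ∏ o : CycleQuotient w, ∑ a, z a ^ cycleLength w o := by
  rw [Finset.prod_univ_sum, Fintype.piFinset_univ, powerSum]
  refine Finset.sum_bij'
    (fun f hf o => Quotient.lift f
      (fun i j => apply_eq_of_sameCycle (Finset.mem_filter.1 hf).2) o)
    (fun p _ i => p ⟦i⟧) (fun _ _ => Finset.mem_univ _) ?_ (fun _ _ => rfl) ?_ ?_
  · intro p _
    rw [Finset.mem_filter]
    exact ⟨Finset.mem_univ _, funext fun i => congrArg p (cycleQuotient_mk_apply w i)⟩
  · intro p _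
    funext o
    induction o using Quotient.inductionOn
    rfl
  · intro f _
    rw [← Finset.prod_fiberwise Finset.univ (fun i => (⟦i⟧ : CycleQuotient w))]
    refine Finset.prod_congr rfl fun o _ => ?_
    rw [cycleLength, Fintype.card_subtype, ← Finset.prod_const]
    refine Finset.prod_congr rfl fun i hi => ?_
    rw [← (Finset.mem_filter.1 hi).2]
    rfl

theorem powerSum_mul_powerSum {A B R : Type*} [Fintype A] [Fintype B] [CommSemiring R]
    (w : Equiv.Perm α) (x : A → R) (y : B → R) :
    powerSum w x * powerSum w y = powerSum w fun p : A × B => x p.1 * y p.2 := by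
  simp only [powerSum_eq_prod_cycles, ← Finset.prod_mul_distrib, Finset.sum_mul_sum,
    Fintype.sum_prod_type, mul_pow]

theorem map_powerSum {A R R' : Type*} [Fintype A] [CommSemiring R] [CommSemiring R'] (φ : R →+* R')
    (w : Equiv.Perm α) (x : A → R) : φ (powerSum w x) = powerSum w fun a => φ (x a) := by
  simp only [powerSum, map_sum, map_prod]

theorem det_one_sub_smul_permMatrix_of_sameCycle {R : Type*} [CommRing R] [Nonempty α]
    {w : Equiv.Perm α} (hw : ∀ i j, w.SameCycle i j) (a : R) :
    (1 - a • w.permMatrix R).det = 1 - a ^ Fintype.card α := by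
  have entry (i j : α) : (1 - a • w.permMatrix R) i j
      = (if i = j then 1 else 0) - (if w i = j then a else 0) := by
    simp [Matrix.one_apply]
  rcases subsingleton_or_nontrivial α with h | h
  · obtain ⟨i⟩ := ‹Nonempty α›
    have : Unique α := ⟨⟨i⟩, fun j => Subsingleton.elim _ _⟩
    simp [Matrix.det_unique, Subsingleton.elim (w default) default]
  have hne (i : α) : w i ≠ i := by
    intro hi
    obtain ⟨j, hj⟩ := exists_ne i
    obtain ⟨m, hm⟩ := hw i j
    exact hj (hm ▸ Equiv.Perm.zpow_apply_eq_self_of_apply_eq_self hi m)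
  have hcyc : w.IsCycle := by
    obtain ⟨i⟩ := ‹Nonempty α›
    exact ⟨i, hne i, fun j _ => hw i j⟩
  have hsign : (Equiv.Perm.sign w : ℤ) = -(-1) ^ Fintype.card α := by
    have hsupp : w.support = Finset.univ := by ext i; simp [hne i]
    rw [hcyc.sign, hsupp, Finset.card_univ]
    simp
  rw [← Matrix.det_transpose, Matrix.det_apply', ← Finset.sum_subset (Finset.subset_univ {1, w})]
  · rw [Finset.sum_pair hcyc.ne_one.symm]
    simp only [Matrix.transpose_apply, entry, hsign, Equiv.Perm.coe_one, id, if_pos, hne,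
      (hne _).symm, if_false, sub_zero, zero_sub, Finset.prod_const, Finset.card_univ, one_pow,
      Equiv.Perm.sign_one, Units.val_one, Int.cast_one, mul_one, neg_pow a]
    push_cast
    rw [neg_mul, ← mul_assoc, ← mul_pow, neg_one_mul, neg_neg, one_pow, one_mul, sub_eq_add_neg]
  · intro σ _ hσ
    obtain ⟨i, hi⟩ : ∃ i, ¬ (σ i = i ∨ σ i = w i) := by
      by_contra! h
      exact hσ (by simpa using eq_one_or_eq_of_forall_apply_eq_or hw h)
    rw [not_or] at hi
    rw [Finset.prod_eq_zero (Finset.mem_univ i), mul_zero]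
    simp [entry, Ne.symm hi.1, Ne.symm hi.2]

theorem det_one_sub_smul_permMatrix {R : Type*} [CommRing R] (w : Equiv.Perm α) (a : R) :
    (1 - a • w.permMatrix R).det = ∏ o : CycleQuotient w, (1 - a ^ cycleLength w o) := by
  let e := Fintype.equivFin (CycleQuotient w)
  let b : α → Fin (Fintype.card (CycleQuotient w)) := fun i => e ⟦i⟧
  have hb_apply (i : α) : b (w i) = b i := congrArg e (cycleQuotient_mk_apply w i)
  have hblock : (1 - a • w.permMatrix R).BlockTriangular b := by
    intro i j hij
    have hij' : i ≠ j := fun h => hij.ne (h ▸ rfl)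
    have hwij : w i ≠ j := fun h => hij.ne (h ▸ hb_apply i)
    simp [hij', hwij]
  rw [hblock.det_fintype, ← e.symm.prod_comp]
  refine Finset.prod_congr rfl fun k _ => ?_
  let v := w.subtypePerm (p := fun i => b i = k) fun i => by rw [hb_apply]
  have hcard : Fintype.card {i // b i = k} = cycleLength w (e.symm k) :=
    Fintype.card_congr (Equiv.subtypeEquivRight fun i => (Equiv.eq_symm_apply e).symm)
  have : Nonempty {i // b i = k} := Fintype.card_pos_iff.1 (hcard ▸ cycleLength_pos w _)
  have hv : ∀ i j, v.SameCycle i j := by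
    rintro ⟨i, hi⟩ ⟨j, hj⟩
    obtain ⟨m, hm⟩ : w.SameCycle i j := Quotient.exact (e.injective (hi.trans hj.symm))
    exact ⟨m, Subtype.ext (by rw [Equiv.Perm.subtypePerm_zpow]; exact hm)⟩
  rw [← hcard, ← det_one_sub_smul_permMatrix_of_sameCycle hv]
  congr 1
  ext i j
  simp [v, Matrix.toSquareBlock_def, Matrix.one_apply, Subtype.ext_iff]

theorem powerSum_geometric_mul_det {R : Type*} [CommRing R] (w : Equiv.Perm α) (q : R) (N : ℕ) :
    powerSum w (fun k : Fin N => q ^ (k : ℕ)) * (1 - q • w.permMatrix R).det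
      = (1 - q ^ N • w.permMatrix R).det := by
  simp only [powerSum_eq_prod_cycles, det_one_sub_smul_permMatrix, ← Finset.prod_mul_distrib]
  refine Finset.prod_congr rfl fun o _ => ?_
  rw [Fin.sum_univ_eq_sum_range (fun k => (q ^ k) ^ cycleLength w o)]
  simp only [← pow_mul, mul_comm _ (cycleLength w o)]
  simp only [pow_mul]
  exact geom_sum_mul_neg _ _

end PowerSum

section Colourings

variable {α A : Type*} [Fintype α]

/-- The content of a colouring: how many points carry each colour, as a monomial exponent. -/
def colorContent (f : α → A) : A →₀ ℕ := ∑ i, Finsupp.single (f i) 1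

theorem colorContent_apply (f : α → A) (a : A) :
    colorContent f a = Fintype.card {i // f i = a} := by
  rw [colorContent, Finsupp.finsetSum_apply, Fintype.card_subtype, Finset.card_filter]
  exact Finset.sum_congr rfl fun i _ => Finsupp.single_apply

theorem prod_comp_eq_prod_pow_colorContent {R : Type*} [Fintype A] [CommMonoid R] (f : α → A)
    (z : A → R) : ∏ i, z (f i) = ∏ a, z a ^ colorContent f a := by
  rw [← Finset.prod_fiberwise Finset.univ f]
  refine Finset.prod_congr rfl fun a _ => ?_
  rw [colorContent_apply, Fintype.card_subtype, ← Finset.prod_const]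
  refine Finset.prod_congr rfl fun i hi => ?_
  rw [(Finset.mem_filter.1 hi).2]

theorem sum_colorContent [Fintype A] (f : α → A) : ∑ a, colorContent f a = Fintype.card α := by
  simp only [colorContent_apply]
  rw [← Fintype.card_sigma, Fintype.card_congr (Equiv.sigmaFiberEquiv f)]

theorem card_colorContent_eq [DecidableEq α] [Fintype A] (m : A →₀ ℕ)
    (hm : ∑ a, m a = Fintype.card α) :
    (Finset.univ.filter fun f : α → A => colorContent f = m).card
      = Nat.multinomial Finset.univ m := by
  have expand : (∑ a, MvPolynomial.X a : MvPolynomial A ℕ) ^ Fintype.card α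
      = ∑ f : α → A, MvPolynomial.monomial (colorContent f) 1 := by
    rw [← Finset.card_univ, ← Finset.prod_const, Finset.prod_univ_sum, Fintype.piFinset_univ]
    simp only [colorContent, MvPolynomial.monomial_sum_one]
    rfl
  have hcoeff := congrArg (MvPolynomial.coeff m) expand
  rw [MvPolynomial.coeff_sum_X_pow_of_fintype, m.sum_fintype _ fun _ => rfl, if_pos hm,
    MvPolynomial.coeff_sum, Finsupp.multinomial_eq_of_support_subset (Finset.subset_univ _)]
    at hcoeff
  simp only [MvPolynomial.coeff_monomial, Finset.sum_boole, Nat.cast_id] at hcoeff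
  exact hcoeff.symm

theorem card_stabilizer_eq_prod_factorial [DecidableEq α] [Fintype A] (f : α → A) :
    (Finset.univ.filter fun w : Equiv.Perm α => f ∘ w = f).card
      = ∏ a, (colorContent f a).factorial := by
  simp only [colorContent_apply, ← Fintype.card_subtype]
  convert DomMulAct.stabilizer_card f

theorem sum_card_stabilizer [DecidableEq α] [Fintype A] (m : A →₀ ℕ)
    (hm : ∑ a, m a = Fintype.card α) :
    ∑ f : α → A with colorContent f = m,
      (Finset.univ.filter fun w : Equiv.Perm α => f ∘ w = f).card
        = (Fintype.card α).factorial := by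
  have hcard : ∀ f ∈ Finset.univ.filter (fun f : α → A => colorContent f = m),
      (Finset.univ.filter fun w : Equiv.Perm α => f ∘ w = f).card = ∏ a, (m a).factorial := by
    intro f hf
    rw [card_stabilizer_eq_prod_factorial, (Finset.mem_filter.1 hf).2]
  rw [Finset.sum_congr rfl hcard, Finset.sum_const, card_colorContent_eq m hm, smul_eq_mul,
    mul_comm, Nat.multinomial_spec, hm]

end Colourings

section GeometricSeries

variable {R : Type*} [CommRing R]

/-- The geometric series `1 / (1 - z u) = ∑ₖ zᵏ uᵏ` in the power series variable `u`. -/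
def geomSeries (z : R) : PowerSeries R := PowerSeries.mk fun k => z ^ k

@[simp]
theorem coeff_geomSeries (z : R) (k : ℕ) : PowerSeries.coeff k (geomSeries z) = z ^ k :=
  PowerSeries.coeff_mk _ _

theorem geomSeries_mul_one_sub (z : R) :
    geomSeries z * (1 - PowerSeries.C z * PowerSeries.X) = 1 := by
  have h := congrArg (PowerSeries.rescale z) (PowerSeries.mk_one_mul_one_sub_eq_one R)
  simpa [geomSeries, PowerSeries.rescale_mk, PowerSeries.rescale_X] using h

theorem sum_powerSum_eq_factorial_mul_coeff {α A : Type*} [Fintype α] [DecidableEq α] [Fintype A]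
    (z : A → R) :
    ∑ w : Equiv.Perm α, powerSum w z = ((Fintype.card α).factorial : R) *
      PowerSeries.coeff (Fintype.card α) (∏ a, geomSeries (z a)) := by
  have maps_to (f : α → A) (_ : f ∈ Finset.univ) :
      colorContent f ∈ Finset.finsuppAntidiag Finset.univ (Fintype.card α) :=
    Finset.mem_finsuppAntidiag.2 ⟨sum_colorContent f, Finset.subset_univ _⟩
  calc ∑ w : Equiv.Perm α, powerSum w z
      = ∑ f : α → A, ((Finset.univ.filter fun w : Equiv.Perm α => f ∘ w = f).card : R) *
          ∏ i, z (f i) := by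
        simp only [powerSum, Finset.sum_filter]
        rw [Finset.sum_comm]
        simp only [← Finset.sum_filter, Finset.sum_const, nsmul_eq_mul]
    _ = _ := by
        rw [PowerSeries.coeff_prod, Finset.mul_sum, ← Finset.sum_fiberwise_of_maps_to maps_to]
        refine Finset.sum_congr rfl fun m hm => ?_
        rw [← sum_card_stabilizer m (Finset.mem_finsuppAntidiag.1 hm).1, Nat.cast_sum,
          Finset.sum_mul]
        refine Finset.sum_congr rfl fun f hf => ?_
        rw [prod_comp_eq_prod_pow_colorContent, (Finset.mem_filter.1 hf).2]
        simp only [coeff_geomSeries]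

end GeometricSeries

section CauchyDeterminant

variable {R : Type*} [CommRing R] {N : ℕ}

/-- The numerator `∏_{i ≠ j} (1 - y i X)` of `1 / (1 - y j X)` over the common denominator
`∏ᵢ (1 - y i X)`. -/
def partialFractionNumerator (y : Fin N → R) (j : Fin N) : Polynomial R :=
  ∏ i ∈ Finset.univ.erase j, (1 - Polynomial.C (y i) * Polynomial.X)

theorem natDegree_partialFractionNumerator_lt (y : Fin N → R) (j : Fin N) :
    (partialFractionNumerator y j).natDegree < N := by
  refine (Polynomial.natDegree_prod_le _ _).trans_lt ?_
  refine (Finset.sum_le_card_nsmul _ _ 1 fun i _ => by compute_degree).trans_lt ?_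
  rw [Finset.card_erase_of_mem (Finset.mem_univ j), Finset.card_fin, smul_eq_mul, mul_one]
  exact Nat.sub_one_lt_of_lt j.pos

theorem geomSeries_eq_prod_mul_sum (y : Fin N → R) (j : Fin N) (x : R) :
    geomSeries (x * y j) = (∏ i, geomSeries (x * y i)) *
      ∑ k : Fin N, (PowerSeries.C x * PowerSeries.X) ^ (k : ℕ) *
        PowerSeries.C ((partialFractionNumerator y j).coeff k) := by
  have eval_numerator : Polynomial.aeval (PowerSeries.C x * PowerSeries.X : PowerSeries R)
        (partialFractionNumerator y j)
      = ∑ k : Fin N, (PowerSeries.C x * PowerSeries.X) ^ (k : ℕ) *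
        PowerSeries.C ((partialFractionNumerator y j).coeff k) := by
    rw [Polynomial.aeval_eq_sum_range' (natDegree_partialFractionNumerator_lt y j),
      ← Fin.sum_univ_eq_sum_range fun i => (partialFractionNumerator y j).coeff i •
        (PowerSeries.C x * PowerSeries.X : PowerSeries R) ^ i]
    exact Finset.sum_congr rfl fun k _ => by rw [PowerSeries.smul_eq_C_mul, mul_comm]
  have eval_factor (i : Fin N) :
      Polynomial.aeval (PowerSeries.C x * PowerSeries.X : PowerSeries R)
        (1 - Polynomial.C (y i) * Polynomial.X)
      = 1 - PowerSeries.C (x * y i) * PowerSeries.X := by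
    simp only [map_sub, map_one, map_mul, Polynomial.aeval_C, Polynomial.aeval_X,
      PowerSeries.algebraMap_apply, Algebra.algebraMap_self, RingHom.id_apply]
    ring
  rw [← eval_numerator, partialFractionNumerator, map_prod,
    ← Finset.mul_prod_erase Finset.univ _ (Finset.mem_univ j), mul_assoc, ← Finset.prod_mul_distrib]
  simp only [eval_factor, geomSeries_mul_one_sub, Finset.prod_const_one, mul_one]

theorem det_coeff_partialFractionNumerator (y : Fin N → R) :
    (Matrix.of fun k j : Fin N => (partialFractionNumerator y j).coeff k).det
      = (Matrix.vandermonde y).det := by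
  let H : PowerSeries R := ∏ i, geomSeries (1 * y i)
  let U : Matrix (Fin N) (Fin N) R := Matrix.of fun m k =>
    if (k : ℕ) ≤ m then PowerSeries.coeff ((m : ℕ) - k) H else 0
  have factorization : (Matrix.vandermonde y).transpose
      = U * Matrix.of fun (k j : Fin N) => (partialFractionNumerator y j).coeff k := by
    ext m j
    have h := congrArg (PowerSeries.coeff (m : ℕ)) (geomSeries_eq_prod_mul_sum y j 1)
    rw [one_mul, coeff_geomSeries, Finset.mul_sum, map_sum] at h
    rw [Matrix.transpose_apply, Matrix.vandermonde_apply, Matrix.mul_apply, h]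
    refine Finset.sum_congr rfl fun k _ => ?_
    rw [map_one, one_mul, ← mul_assoc, PowerSeries.coeff_mul_C, PowerSeries.coeff_mul_X_pow']
    rfl
  have det_U : U.det = 1 := by
    rw [Matrix.det_of_isLowerTriangular]
    · refine Finset.prod_eq_one fun i _ => ?_
      simp [U, H, geomSeries, map_prod, ← PowerSeries.coeff_zero_eq_constantCoeff_apply]
    · intro i j hij
      exact if_neg (not_le.2 hij)
  rw [← Matrix.det_transpose (Matrix.vandermonde y), factorization, Matrix.det_mul, det_U, one_mul]

theorem cauchy_det_geomSeries (x y : Fin N → R) :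
    (Matrix.of fun i j => geomSeries (x i * y j)).det
      = (∏ i, ∏ j, geomSeries (x i * y j)) * (PowerSeries.X ^ (∑ k : Fin N, (k : ℕ)) *
        PowerSeries.C ((Matrix.vandermonde x).det * (Matrix.vandermonde y).det)) := by
  let E : Matrix (Fin N) (Fin N) R := Matrix.of fun k j => (partialFractionNumerator y j).coeff k
  have factorization : (Matrix.of fun i j => geomSeries (x i * y j)) =
      Matrix.of fun i j => (∏ j', geomSeries (x i * y j')) *
        ((Matrix.of fun i (k : Fin N) => (PowerSeries.X : PowerSeries R) ^ (k : ℕ) *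
          (Matrix.vandermonde x).map PowerSeries.C i k) * E.map PowerSeries.C) i j := by
    refine Matrix.ext fun i j => ?_
    rw [Matrix.of_apply, Matrix.of_apply, geomSeries_eq_prod_mul_sum, Matrix.mul_apply]
    refine congrArg _ (Finset.sum_congr rfl fun k _ => ?_)
    simp only [Matrix.of_apply, Matrix.map_apply, Matrix.vandermonde_apply, E, map_pow, mul_pow]
    ring
  rw [factorization, Matrix.det_mul_column, Matrix.det_mul, Matrix.det_mul_row,
    ← det_coeff_partialFractionNumerator y, map_mul, RingHom.map_det, RingHom.map_det,
    Finset.prod_pow_eq_pow_sum]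
  simp only [RingHom.mapMatrix_apply]
  ring

end CauchyDeterminant

section FrobeniusCharacter

variable {α R : Type*} [Fintype α] [DecidableEq α] [CommRing R] {N : ℕ}

theorem map_det_vandermonde {R' : Type*} [CommRing R'] (φ : R →+* R') (x : Fin N → R) :
    φ (Matrix.vandermonde x).det = (Matrix.vandermonde fun i => φ (x i)).det := by
  rw [RingHom.map_det]
  congr 1
  ext i j
  simp [Matrix.vandermonde_apply]

/-- Frobenius' formula for the symmetric group: the value at `w` of the virtual character attached
to the strictly increasing exponent vector `l = λ + δ` is the coefficient of `x ^ l` in the product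
of the Vandermonde determinant and the power sum of `w`. -/
def frobeniusChar (l : Fin N →₀ ℕ) (w : Equiv.Perm α) : ℤ :=
  MvPolynomial.coeff l ((Matrix.vandermonde (MvPolynomial.X : Fin N → MvPolynomial (Fin N) ℤ)).det *
    powerSum w MvPolynomial.X)

theorem intCast_frobeniusChar (l : Fin N →₀ ℕ) (w : Equiv.Perm α) :
    (frobeniusChar l w : R) = MvPolynomial.coeff l
      ((Matrix.vandermonde (MvPolynomial.X : Fin N → MvPolynomial (Fin N) R)).det *
        powerSum w MvPolynomial.X) := by
  rw [frobeniusChar, ← eq_intCast (Int.castRingHom R), ← MvPolynomial.coeff_map, map_mul,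
    map_powerSum, map_det_vandermonde]
  simp only [MvPolynomial.map_X]

theorem mvPolynomial_coeff_intCast_mul {ι : Type*} (l : ι →₀ ℕ) (k : ℤ) (p : MvPolynomial ι R) :
    MvPolynomial.coeff l ((k : MvPolynomial ι R) * p) = k * MvPolynomial.coeff l p := by
  rw [← MvPolynomial.coeff_C_mul, map_intCast]

theorem coeff_prod_geomSeries {ι : Type*} [Fintype ι] (z : ι → R) (l : ι →₀ ℕ) :
    MvPolynomial.coeff l (PowerSeries.coeff (∑ i, l i)
      (∏ i, geomSeries (MvPolynomial.X i * MvPolynomial.C (z i)))) = ∏ i, z i ^ l i := by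
  have term (m : ι →₀ ℕ) :
      ∏ i, PowerSeries.coeff (m i) (geomSeries (MvPolynomial.X i * MvPolynomial.C (z i)))
        = MvPolynomial.monomial m (∏ i, z i ^ m i) := by
    simp only [coeff_geomSeries, mul_pow, Finset.prod_mul_distrib, ← map_pow, ← map_prod]
    rw [MvPolynomial.monomial_eq, Finsupp.prod_fintype _ _ (by simp), mul_comm]
  rw [PowerSeries.coeff_prod, MvPolynomial.coeff_sum]
  simp only [term, MvPolynomial.coeff_monomial]
  rw [Finset.sum_ite_eq', if_pos]
  exact Finset.mem_finsuppAntidiag.2 ⟨rfl, Finset.subset_univ _⟩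

theorem coeff_det_geomSeries (y : Fin N → R) (l : Fin N →₀ ℕ) :
    MvPolynomial.coeff l (PowerSeries.coeff (∑ i, l i) (Matrix.of fun i j =>
      geomSeries (MvPolynomial.X i * MvPolynomial.C (y j) : MvPolynomial (Fin N) R)).det)
      = (Matrix.of fun i j => y i ^ l j).det := by
  rw [← Matrix.det_transpose, Matrix.det_apply', Matrix.det_apply', map_sum,
    MvPolynomial.coeff_sum]
  refine Finset.sum_congr rfl fun σ _ => ?_
  simp only [Matrix.transpose_apply, Matrix.of_apply]
  rw [← map_intCast (PowerSeries.C (R := MvPolynomial (Fin N) R)), PowerSeries.coeff_C_mul,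
    mvPolynomial_coeff_intCast_mul, coeff_prod_geomSeries fun i => y (σ i)]

theorem sum_frobeniusChar_mul_powerSum (y : Fin N → R) (l : Fin N →₀ ℕ)
    (hl : ∑ i, l i = Fintype.card α + ∑ k : Fin N, (k : ℕ)) :
    ∑ w : Equiv.Perm α, (frobeniusChar l w : R) * ((Matrix.vandermonde y).det * powerSum w y)
      = ((Fintype.card α).factorial : R) * (Matrix.of fun i j => y i ^ l j).det := by
  let x : Fin N → MvPolynomial (Fin N) R := MvPolynomial.X
  let y' : Fin N → MvPolynomial (Fin N) R := fun j => MvPolynomial.C (y j)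
  calc ∑ w : Equiv.Perm α, (frobeniusChar l w : R) * ((Matrix.vandermonde y).det * powerSum w y)
      = MvPolynomial.coeff l ((Matrix.vandermonde x).det * (Matrix.vandermonde y').det *
          ∑ w : Equiv.Perm α, powerSum w fun p : Fin N × Fin N => x p.1 * y' p.2) := by
        rw [Finset.mul_sum, MvPolynomial.coeff_sum]
        refine Finset.sum_congr rfl fun w _ => ?_
        rw [← powerSum_mul_powerSum, intCast_frobeniusChar, mul_comm, ← MvPolynomial.coeff_C_mul,
          map_mul, map_powerSum, map_det_vandermonde]
        exact congrArg _ (by ring)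
    _ = MvPolynomial.coeff l (((Fintype.card α).factorial : MvPolynomial (Fin N) R) *
          PowerSeries.coeff (∑ i, l i) (Matrix.of fun i j => geomSeries (x i * y' j)).det) := by
        rw [sum_powerSum_eq_factorial_mul_coeff, cauchy_det_geomSeries, ← mul_assoc (∏ i, _), hl,
          PowerSeries.coeff_mul_C, PowerSeries.coeff_mul_X_pow, Fintype.prod_prod_type]
        exact congrArg _ (by ring)
    _ = _ := by
        rw [← map_natCast MvPolynomial.C, MvPolynomial.coeff_C_mul, coeff_det_geomSeries]

theorem coeff_det_X_pow {ι : Type*} [Fintype ι] [DecidableEq ι] (l : ι →₀ ℕ)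
    (hl : Function.Injective l) :
    MvPolynomial.coeff l
      (Matrix.of fun i j => (MvPolynomial.X i : MvPolynomial ι R) ^ l j).det = 1 := by
  have exponent_eq_iff (σ : Equiv.Perm ι) :
      ∑ i, Finsupp.single (σ i) (l i) = l ↔ σ = 1 := by
    have hperm : ∑ i, Finsupp.single (σ i) (l i) = l.mapDomain σ := by
      rw [Finsupp.mapDomain, l.sum_fintype _ fun i => Finsupp.single_zero _]
    refine ⟨fun h => Equiv.ext fun i => hl ?_, ?_⟩
    · have := DFunLike.congr_fun (hperm.symm.trans h) (σ i)
      rwa [Finsupp.mapDomain_apply σ.injective, eq_comm] at this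
    · rintro rfl
      exact Finsupp.univ_sum_single l
  rw [Matrix.det_apply', MvPolynomial.coeff_sum]
  simp only [mvPolynomial_coeff_intCast_mul, Matrix.of_apply, MvPolynomial.X_pow_eq_monomial,
    ← MvPolynomial.monomial_sum_one, MvPolynomial.coeff_monomial, exponent_eq_iff, mul_ite, mul_one,
    mul_zero, Finset.sum_ite_eq', Finset.mem_univ, if_true, Equiv.Perm.sign_one, Units.val_one,
    Int.cast_one]

theorem sum_frobeniusChar_sq (l : Fin N →₀ ℕ)
    (hl : ∑ i, l i = Fintype.card α + ∑ k : Fin N, (k : ℕ)) (hinj : Function.Injective l) :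
    ∑ w : Equiv.Perm α, frobeniusChar l w ^ 2 = (Fintype.card α).factorial := by
  have h := congrArg (MvPolynomial.coeff l) (sum_frobeniusChar_mul_powerSum (α := α)
    (MvPolynomial.X : Fin N → MvPolynomial (Fin N) ℤ) l hl)
  rw [MvPolynomial.coeff_sum, ← Int.cast_natCast, mvPolynomial_coeff_intCast_mul,
    coeff_det_X_pow l hinj, mul_one] at h
  simp only [mvPolynomial_coeff_intCast_mul, Int.cast_id] at h
  simpa only [sq, ← intCast_frobeniusChar, Int.cast_id] using h

/-- The sum of `φ` over the Young subgroup of the permutations preserving the colouring `f`. -/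
def stabilizerSum {A M : Type*} [AddCommMonoid M] (φ : Equiv.Perm α → M) (f : α → A) : M :=
  ∑ w ∈ Finset.univ.filter (fun w : Equiv.Perm α => f ∘ w = f), φ w

theorem det_vandermonde_X :
    (Matrix.vandermonde (MvPolynomial.X : Fin N → MvPolynomial (Fin N) R)).det
      = ∑ σ : Equiv.Perm (Fin N), ((Equiv.Perm.sign σ : ℤ) : MvPolynomial (Fin N) R) *
        MvPolynomial.monomial (Finsupp.equivFunOnFinite.symm fun j => (σ j : ℕ)) 1 := by
  rw [← Matrix.det_transpose, Matrix.det_apply']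
  refine Finset.sum_congr rfl fun σ _ => ?_
  rw [MvPolynomial.monomial_eq, Finsupp.prod_fintype _ _ (by simp), map_one, one_mul]
  rfl

theorem frobeniusChar_eq_sum (l : Fin N →₀ ℕ) (w : Equiv.Perm α) :
    frobeniusChar l w = ∑ σ : Equiv.Perm (Fin N), (Equiv.Perm.sign σ : ℤ) *
      ∑ f : α → Fin N with ∀ j, (σ j : ℕ) + colorContent f j = l j,
        if f ∘ w = f then 1 else 0 := by
  have prod_X (f : α → Fin N) : ∏ i, (MvPolynomial.X (f i) : MvPolynomial (Fin N) ℤ)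
      = MvPolynomial.monomial (colorContent f) 1 := (MvPolynomial.monomial_sum_one _ _).symm
  have exponent_eq_iff (σ : Equiv.Perm (Fin N)) (f : α → Fin N) :
      Finsupp.equivFunOnFinite.symm (fun j => (σ j : ℕ)) + colorContent f = l ↔
        ∀ j, (σ j : ℕ) + colorContent f j = l j := Finsupp.ext_iff
  rw [frobeniusChar, det_vandermonde_X, Finset.sum_mul, MvPolynomial.coeff_sum]
  refine Finset.sum_congr rfl fun σ _ => ?_
  rw [mul_assoc, mvPolynomial_coeff_intCast_mul, Int.cast_id, powerSum, Finset.mul_sum,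
    MvPolynomial.coeff_sum]
  simp only [prod_X, MvPolynomial.monomial_mul, mul_one, MvPolynomial.coeff_monomial,
    exponent_eq_iff, Finset.sum_boole, Finset.filter_filter]
  simp only [and_comm]
  congr!

theorem sum_mul_frobeniusChar (φ : Equiv.Perm α → ℤ) (l : Fin N →₀ ℕ) :
    ∑ w, φ w * frobeniusChar l w = ∑ σ : Equiv.Perm (Fin N), (Equiv.Perm.sign σ : ℤ) *
      ∑ f : α → Fin N with ∀ j, (σ j : ℕ) + colorContent f j = l j, stabilizerSum φ f := by
  simp only [frobeniusChar_eq_sum, stabilizerSum, Finset.mul_sum]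
  rw [Finset.sum_comm]
  refine Finset.sum_congr rfl fun σ _ => ?_
  rw [Finset.sum_comm]
  refine Finset.sum_congr rfl fun f _ => ?_
  rw [Finset.sum_filter]
  refine Finset.sum_congr rfl fun w _ => ?_
  split_ifs <;> ring

end FrobeniusCharacter

section HookLengths

open YoungDiagram

variable (μ : YoungDiagram) {N : ℕ}

@[to_additive]
theorem prod_cells_eq_prod_rows {M : Type*} [CommMonoid M] (hN : μ.colLen 0 ≤ N) (g : ℕ × ℕ → M) :
    ∏ c ∈ μ.cells, g c = ∏ i : Fin N, ∏ k ∈ Finset.range (μ.rowLen i), g (i, k) := by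
  rw [Fin.prod_univ_eq_prod_range (fun i => ∏ k ∈ Finset.range (μ.rowLen i), g (i, k)) N]
  refine Finset.prod_finset_product _ _ _ fun c => ?_
  rw [mem_cells, ← Prod.mk.eta (p := c), mem_iff_lt_rowLen, Finset.mem_range, Finset.mem_range,
    iff_and_self, ← mem_iff_lt_rowLen]
  intro h
  exact (mem_iff_lt_colLen.1 (μ.up_left_mem le_rfl (Nat.zero_le _) h)).trans_le hN

theorem hookLen_pos {c : ℕ × ℕ} (hc : c ∈ μ.cells) : 0 < hookLen μ c := by
  have hrow := mem_iff_lt_rowLen.1 (show (c.1, c.2) ∈ μ from hc)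
  have hcol := mem_iff_lt_colLen.1 (show (c.1, c.2) ∈ μ from hc)
  rw [hookLen]
  omega

theorem hookLen_strictAntiOn (i : ℕ) :
    StrictAntiOn (fun k => hookLen μ (i, k)) (Finset.range (μ.rowLen i)) := by
  intro k _ k' hk' hlt
  have hk' : k' < μ.rowLen i := Finset.mem_range.1 hk'
  have hcol : i < μ.colLen k' := by rwa [← mem_iff_lt_colLen, mem_iff_lt_rowLen]
  have hanti := μ.colLen_anti k k' hlt.le
  simp only [hookLen]
  omega

/-- The beta numbers `λ + δ` of a diagram with at most `N` rows, in increasing order. -/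
def betaNumber (μ : YoungDiagram) (j : Fin N) : ℕ := j + μ.rowLen j.rev

theorem betaNumber_strictMono : StrictMono (betaNumber μ : Fin N → ℕ) := by
  intro i j hij
  have hanti := μ.rowLen_anti j.rev i.rev (Fin.rev_le_rev.2 hij.le)
  simp only [betaNumber]
  omega

theorem hookLen_ne_betaNumber_sub (hN : μ.colLen 0 ≤ N) {i j : Fin N} (hij : i < j) {k : ℕ}
    (hk : k < μ.rowLen j.rev) :
    hookLen μ (j.rev, k) ≠ betaNumber μ j - betaNumber μ i := by
  have : (j.rev : ℕ) < μ.colLen k := by rwa [← mem_iff_lt_colLen, mem_iff_lt_rowLen]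
  have : μ.colLen k ≤ N := (μ.colLen_anti 0 k (Nat.zero_le _)).trans hN
  have hbeta := betaNumber_strictMono μ hij
  have hcell : k < μ.rowLen i.rev ↔ (i.rev : ℕ) < μ.colLen k :=
    mem_iff_lt_rowLen.symm.trans mem_iff_lt_colLen
  simp only [hookLen, betaNumber, Fin.val_rev] at *
  by_cases h : k < μ.rowLen (N - (i + 1))
  · have := hcell.1 h
    omega
  · have := mt hcell.2 h
    omega

theorem disjoint_hookLens_betaNumber_subs (hN : μ.colLen 0 ≤ N) (j : Fin N) :
    Disjoint ((Finset.range (μ.rowLen j.rev)).image fun k => hookLen μ (j.rev, k))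
      ((Finset.Iio j).image fun i => betaNumber μ j - betaNumber μ i) := by
  simp only [Finset.disjoint_left, Finset.mem_image, Finset.mem_range, Finset.mem_Iio]
  rintro _ ⟨k, hk, rfl⟩ ⟨i, hi, h⟩
  exact hookLen_ne_betaNumber_sub μ hN hi hk h.symm

theorem betaNumber_sub_injOn (j : Fin N) :
    Set.InjOn (fun i : Fin N => betaNumber μ j - betaNumber μ i) ↑(Finset.Iio j) := by
  intro i hi i' hi' h
  have hlt := betaNumber_strictMono μ (Finset.mem_Iio.1 hi)
  have hlt' := betaNumber_strictMono μ (Finset.mem_Iio.1 hi')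
  exact (betaNumber_strictMono μ).injective (by simp only at h; omega)

theorem hookLens_union_betaNumber_subs (hN : μ.colLen 0 ≤ N) (j : Fin N) :
    ((Finset.range (μ.rowLen j.rev)).image fun k => hookLen μ (j.rev, k)) ∪
        ((Finset.Iio j).image fun i => betaNumber μ j - betaNumber μ i)
      = Finset.Icc 1 (betaNumber μ j) := by
  refine Finset.eq_of_subset_of_card_le (Finset.union_subset ?_ ?_) ?_
  · intro m hm
    obtain ⟨k, hk, rfl⟩ := Finset.mem_image.1 hm
    have hk : k < μ.rowLen j.rev := Finset.mem_range.1 hk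
    have hcol : (j.rev : ℕ) < μ.colLen k := by rwa [← mem_iff_lt_colLen, mem_iff_lt_rowLen]
    have hcolN : μ.colLen k ≤ N := (μ.colLen_anti 0 k (Nat.zero_le _)).trans hN
    simp only [Finset.mem_Icc, hookLen, betaNumber, Fin.val_rev] at *
    omega
  · intro m hm
    obtain ⟨i, hi, rfl⟩ := Finset.mem_image.1 hm
    have := betaNumber_strictMono μ (Finset.mem_Iio.1 hi)
    rw [Finset.mem_Icc]
    omega
  · rw [Finset.card_union_of_disjoint (disjoint_hookLens_betaNumber_subs μ hN j),
      Finset.card_image_of_injOn (hookLen_strictAntiOn μ _).injOn,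
      Finset.card_image_of_injOn (betaNumber_sub_injOn μ j), Finset.card_range, Fin.card_Iio,
      Nat.card_Icc, betaNumber]
    omega

theorem prod_hookLen_row_mul_prod_betaNumber_sub {M : Type*} [CommMonoid M] (hN : μ.colLen 0 ≤ N)
    (g : ℕ → M) (j : Fin N) :
    (∏ k ∈ Finset.range (μ.rowLen j.rev), g (hookLen μ (j.rev, k))) *
      ∏ i ∈ Finset.Iio j, g (betaNumber μ j - betaNumber μ i)
      = ∏ m ∈ Finset.Icc 1 (betaNumber μ j), g m := by
  rw [← hookLens_union_betaNumber_subs μ hN j,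
    Finset.prod_union (disjoint_hookLens_betaNumber_subs μ hN j),
    Finset.prod_image (hookLen_strictAntiOn μ _).injOn,
    Finset.prod_image (betaNumber_sub_injOn μ j)]

theorem prod_Iio_sub {M : Type*} [CommMonoid M] (g : ℕ → M) (j : Fin N) :
    ∏ i ∈ Finset.Iio j, g ((j : ℕ) - i) = ∏ m ∈ Finset.range j, g (m + 1) := by
  rw [← Finset.prod_range_reflect, ← Nat.Iio_eq_range, ← Fin.map_valEmbedding_Iio, Finset.prod_map]
  refine Finset.prod_congr rfl fun i hi => congrArg g ?_
  have : (i : ℕ) < j := Fin.lt_def.1 (Finset.mem_Iio.1 (by simpa using hi))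
  rw [Fin.valEmbedding_apply]
  omega

theorem prod_shifted_content_row_mul_prod_sub {M : Type*} [CommMonoid M] (g : ℕ → M) (j : Fin N) :
    (∏ k ∈ Finset.range (μ.rowLen j.rev), g (N + k - j.rev)) * ∏ i ∈ Finset.Iio j, g ((j : ℕ) - i)
      = ∏ m ∈ Finset.Icc 1 (betaNumber μ j), g m := by
  have shift : ∏ m ∈ Finset.Icc 1 (betaNumber μ j), g m
      = ∏ m ∈ Finset.range (betaNumber μ j), g (m + 1) := by
    rw [Finset.range_eq_Ico, Finset.prod_Ico_add' g 0 (betaNumber μ j) 1]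
    rfl
  rw [shift, prod_Iio_sub, betaNumber, Finset.prod_range_add, mul_comm]
  congr 1
  refine Finset.prod_congr rfl fun k _ => congrArg g ?_
  rw [Fin.val_rev]
  omega

theorem det_vandermonde_pow {R : Type*} [CommRing R] (q : R) {l : Fin N → ℕ} (hl : Monotone l) :
    (Matrix.vandermonde fun i => q ^ l i).det
      = (∏ j : Fin N, ∏ _i ∈ Finset.Iio j, (-1 : R)) * q ^ (∑ i : Fin N, (i.rev : ℕ) * l i) *
        ∏ j, ∏ i ∈ Finset.Iio j, (1 - q ^ (l j - l i)) := by
  have pow_sum : q ^ (∑ i : Fin N, (i.rev : ℕ) * l i)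
      = ∏ j : Fin N, ∏ i ∈ Finset.Iio j, q ^ l i := by
    rw [Finset.prod_comm' (t' := Finset.univ) (s' := fun i => Finset.Ioi i) (by simp),
      ← Finset.prod_pow_eq_pow_sum]
    refine Finset.prod_congr rfl fun i _ => ?_
    rw [Finset.prod_const, Fin.card_Ioi, ← pow_mul, mul_comm, Fin.val_rev, Nat.sub_sub,
      Nat.add_comm 1]
  rw [Matrix.det_vandermonde,
    Finset.prod_comm' (t' := Finset.univ) (s' := fun j => Finset.Iio j) (by simp), pow_sum]
  simp only [← Finset.prod_mul_distrib]
  refine Finset.prod_congr rfl fun j _ => Finset.prod_congr rfl fun i hi => ?_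
  have split : q ^ l j = q ^ l i * q ^ (l j - l i) := by
    rw [← pow_add, Nat.add_sub_cancel' (hl (Finset.mem_Iio.1 hi).le)]
  rw [split]
  ring

theorem sum_rowLen_rev (hN : μ.colLen 0 ≤ N) : ∑ j : Fin N, μ.rowLen j.rev = μ.card := by
  rw [YoungDiagram.card, Finset.card_eq_sum_ones, sum_cells_eq_sum_rows μ hN]
  simp only [Finset.sum_const, Finset.card_range, smul_eq_mul, mul_one]
  exact Equiv.sum_comp Fin.revPerm fun j : Fin N => μ.rowLen j

theorem sum_betaNumber (hN : μ.colLen 0 ≤ N) :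
    ∑ j : Fin N, betaNumber μ j = μ.card + ∑ j : Fin N, (j : ℕ) := by
  simp only [betaNumber, Finset.sum_add_distrib, sum_rowLen_rev μ hN, add_comm]

theorem sum_rev_mul_betaNumber (hN : μ.colLen 0 ≤ N) :
    ∑ i : Fin N, (i.rev : ℕ) * betaNumber μ i = nInv μ + ∑ i : Fin N, (i.rev : ℕ) * i := by
  rw [nInv, sum_cells_eq_sum_rows μ hN,
    ← Equiv.sum_comp Fin.revPerm fun i : Fin N => ∑ _k ∈ Finset.range (μ.rowLen i), (i : ℕ),
    ← Finset.sum_add_distrib]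
  refine Finset.sum_congr rfl fun i _ => ?_
  simp only [betaNumber, Fin.revPerm_apply, Finset.sum_const, Finset.card_range, smul_eq_mul]
  ring

theorem prod_hookLen_mul_det_vandermonde {R : Type*} [CommRing R] (q : R) (hN : μ.colLen 0 ≤ N) :
    (∏ c ∈ μ.cells, (1 - q ^ hookLen μ c)) *
        (Matrix.vandermonde fun i : Fin N => q ^ betaNumber μ i).det
      = q ^ nInv μ * (∏ c ∈ μ.cells, (1 - q ^ (N + c.2 - c.1))) *
        (Matrix.vandermonde fun i : Fin N => q ^ (i : ℕ)).det := by
  have rows := Finset.prod_congr (rfl : (Finset.univ : Finset (Fin N)) = _) fun j _ =>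
    (prod_hookLen_row_mul_prod_betaNumber_sub μ hN (fun m => 1 - q ^ m) j).trans
      (prod_shifted_content_row_mul_prod_sub μ (fun m => 1 - q ^ m) j).symm
  rw [Finset.prod_mul_distrib, Finset.prod_mul_distrib] at rows
  rw [det_vandermonde_pow q (betaNumber_strictMono μ).monotone,
    det_vandermonde_pow q (l := fun i : Fin N => (i : ℕ)) Fin.val_strictMono.monotone,
    prod_cells_eq_prod_rows μ hN, prod_cells_eq_prod_rows μ hN, sum_rev_mul_betaNumber μ hN,
    pow_add, ← Equiv.prod_comp Fin.revPerm, ← Equiv.prod_comp Fin.revPerm fun i : Fin N =>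
      ∏ k ∈ Finset.range (μ.rowLen i), (1 - q ^ (N + k - i))]
  simp only [Fin.revPerm_apply]
  linear_combination (∏ j : Fin N, ∏ _i ∈ Finset.Iio j, (-1 : R)) * q ^ nInv μ *
    q ^ (∑ i : Fin N, (i.rev : ℕ) * (i : ℕ)) * rows

end HookLengths

section Representations

open Representation

variable {k α W : Type*} [Field k] [AddCommGroup W] [Module k W]

theorem finrank_intertwiningMap_self_eq_one [CharZero k] [FiniteDimensional k W] {G : Type*}
    [Group G] [Fintype G] (ρ : Representation k G W)
    (h : ∑ g, ρ.character g * ρ.character g⁻¹ = Nat.card G) :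
    Module.finrank k (IntertwiningMap ρ ρ) = 1 := by
  have card_ne_zero : (Nat.card G : k) ≠ 0 := Nat.cast_ne_zero.2 Nat.card_pos.ne'
  have := invertibleOfNonzero card_ne_zero
  have := card_inv_mul_sum_char_mul_char_eq_finrank ρ ρ
  rw [h, inv_mul_cancel₀ card_ne_zero] at this
  exact_mod_cast this.symm

/- The average of `b` over conjugation by `G` has the same trace as `b`, hence is a nonzero
scalar, and `a` does not kill it. -/
theorem exists_mul_map_mul_ne_zero {G : Type*} [Group G] [Fintype G]
    [Invertible (Fintype.card G : k)] (ρ : Representation k G W)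
    (hρ : Module.finrank k (IntertwiningMap ρ ρ) = 1) {a b : Module.End k W} (ha : a ≠ 0)
    (hb : LinearMap.trace k W b ≠ 0) :
    ∃ g, a * ρ g * b ≠ 0 := by
  by_contra! hab
  let z : Module.End k W := averageMap (linHom ρ ρ) b
  have z_eq : z = ⅟(Fintype.card G : k) • ∑ g, ρ g * b * ρ g⁻¹ := by
    simp [z, GroupAlgebra.average, Module.End.mul_eq_comp, LinearMap.comp_assoc]
  have trace_z : LinearMap.trace k W z = LinearMap.trace k W b := by
    have trace_conj (g : G) : LinearMap.trace k W (ρ g * b * ρ g⁻¹) = LinearMap.trace k W b := by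
      rw [LinearMap.trace_mul_comm, ← mul_assoc, ← map_mul, inv_mul_cancel, map_one, one_mul]
    simp only [z_eq, map_smul, map_sum, trace_conj, Finset.sum_const, Finset.card_univ,
      nsmul_eq_mul, smul_eq_mul, invOf_mul_cancel_left']
  have mul_z : a * z = 0 := by
    rw [z_eq, mul_smul_comm, Finset.mul_sum, Finset.sum_eq_zero, smul_zero]
    intro g _
    rw [← mul_assoc, ← mul_assoc, hab, zero_mul]
  have id_ne_zero : IntertwiningMap.id ρ ≠ 0 := fun h => ha <| by
    rw [← mul_one a, show (1 : Module.End k W) = 0 from congrArg IntertwiningMap.toLinearMap h,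
      mul_zero]
  obtain ⟨c, hc⟩ := (finrank_eq_one_iff_of_nonzero' _ id_ne_zero).1 hρ
    (invariantsEquivIntertwiningMap ρ ρ ⟨z, averageMap_invariant _ b⟩)
  have z_scalar : c • (1 : Module.End k W) = z := congrArg IntertwiningMap.toLinearMap hc
  rw [← z_scalar, mul_smul_comm, mul_one] at mul_z
  have hc0 : c = 0 := (smul_eq_zero.1 mul_z).resolve_right ha
  rw [← trace_z, ← z_scalar, hc0, zero_smul, map_zero] at hb
  exact hb rfl

variable [Fintype α] [DecidableEq α] {A B : Type*}

theorem map_stabilizerSum {M M' F' : Type*} [AddCommMonoid M] [AddCommMonoid M'] [FunLike F' M M']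
    [AddMonoidHomClass F' M M'] (φ : F') (ψ : Equiv.Perm α → M) (f : α → A) :
    φ (stabilizerSum ψ f) = stabilizerSum (fun w => φ (ψ w)) f :=
  map_sum φ _ _

theorem intCast_stabilizerSum {R : Type*} [Ring R] (φ : Equiv.Perm α → ℤ) (f : α → A) :
    ((stabilizerSum φ f : ℤ) : R) = stabilizerSum (fun w => (φ w : R)) f :=
  map_stabilizerSum (Int.castRingHom R) φ f

theorem stabilizerSum_comp {M : Type*} [AddCommMonoid M] (φ : Equiv.Perm α → M) (f : α → A)
    {g : A → B} (hg : Function.Injective g) : stabilizerSum φ (g ∘ f) = stabilizerSum φ f := by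
  simp only [stabilizerSum, Function.comp_assoc, hg.comp_left.eq_iff]

theorem stabilizerSum_mul_left {M : Type*} [AddCommMonoid M] (φ : Equiv.Perm α → M) {f : α → A}
    {τ : Equiv.Perm α} (hτ : f ∘ τ = f) :
    stabilizerSum (fun w => φ (τ * w)) f = stabilizerSum φ f := by
  refine Finset.sum_equiv (Equiv.mulLeft τ) (fun w => ?_) fun w _ => rfl
  simp only [Finset.mem_filter_univ, Equiv.coe_mulLeft, Equiv.Perm.coe_mul, ← Function.comp_assoc,
    hτ]

theorem stabilizerSum_mul_right {M : Type*} [AddCommMonoid M] (φ : Equiv.Perm α → M) {f : α → A}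
    {τ : Equiv.Perm α} (hτ : f ∘ τ = f) :
    stabilizerSum (fun w => φ (w * τ)) f = stabilizerSum φ f := by
  refine Finset.sum_equiv (Equiv.mulRight τ) (fun w => ?_) fun w _ => rfl
  simp only [Finset.mem_filter_univ, Equiv.coe_mulRight, Equiv.Perm.coe_mul, ← Function.comp_assoc]
  nth_rewrite 4 [← hτ]
  exact τ.surjective.injective_comp_right.eq_iff.symm

omit [Fintype α] in
theorem comp_swap_eq_self {f : α → A} {i j : α} (h : f i = f j) : f ∘ Equiv.swap i j = f := by
  rw [Equiv.comp_swap_eq_update, h, Function.update_eq_self, ← h, Function.update_eq_self]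

theorem stabilizerSum_mul_map_swap (ρ : Representation k (Equiv.Perm α) W) {f : α → A} {i j : α}
    (h : f i = f j) : stabilizerSum ρ f * ρ (Equiv.swap i j) = stabilizerSum ρ f := by
  conv_rhs => rw [← stabilizerSum_mul_right ρ (comp_swap_eq_self h)]
  simp only [stabilizerSum, Finset.sum_mul, map_mul]

theorem map_swap_mul_signed_stabilizerSum (ρ : Representation k (Equiv.Perm α) W) {c : α → A}
    {i j : α} (hij : i ≠ j) (h : c i = c j) :
    ρ (Equiv.swap i j) * stabilizerSum (fun w => (Equiv.Perm.sign w : ℤ) • ρ w) c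
      = -stabilizerSum (fun w => (Equiv.Perm.sign w : ℤ) • ρ w) c := by
  conv_rhs =>
    rw [← stabilizerSum_mul_left (fun w => (Equiv.Perm.sign w : ℤ) • ρ w) (comp_swap_eq_self h)]
  simp only [stabilizerSum, Finset.mul_sum, mul_smul_comm, map_mul, Equiv.Perm.sign_swap hij,
    neg_mul, one_mul, Units.val_neg, neg_smul, Finset.sum_neg_distrib, neg_neg]

/- A transposition exchanging two points with the same value under `f ∘ g` and under `c` would be
absorbed by both symmetrizers with opposite signs. -/
theorem exists_perm_injective_prodMk [CharZero k] (ρ : Representation k (Equiv.Perm α) W)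
    (hρ : Module.finrank k (IntertwiningMap ρ ρ) = 1) (f : α → A) (c : α → B)
    (hf : stabilizerSum ρ.character f ≠ 0)
    (hc : stabilizerSum (fun w => (Equiv.Perm.sign w : ℤ) • ρ.character w) c ≠ 0) :
    ∃ g : Equiv.Perm α, Function.Injective fun i => (f (g i), c i) := by
  have := invertibleOfNonzero (show (Fintype.card (Equiv.Perm α) : k) ≠ 0 from
    Nat.cast_ne_zero.2 Fintype.card_ne_zero)
  let a := stabilizerSum ρ f
  let b := stabilizerSum (fun w => (Equiv.Perm.sign w : ℤ) • ρ w) c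
  have ha : a ≠ 0 := by
    intro h
    have := map_stabilizerSum (LinearMap.trace k W) ρ f
    rw [show stabilizerSum ρ f = 0 from h, map_zero] at this
    exact hf this.symm
  have hb : LinearMap.trace k W b ≠ 0 := by
    simpa only [b, map_stabilizerSum, map_zsmul, character] using hc
  obtain ⟨g, hg⟩ := exists_mul_map_mul_ne_zero ρ hρ ha hb
  refine ⟨g, fun i j hij => by_contra fun hne => hg ?_⟩
  obtain ⟨hfij, hcij⟩ := Prod.mk.inj hij
  have swap_g : Equiv.swap (g i) (g j) * g = g * Equiv.swap i j := by
    rw [Equiv.swap_apply_apply, inv_mul_cancel_right]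
  suffices h : a * ρ g * b = -(a * ρ g * b) by
    rwa [eq_neg_iff_add_eq_zero, ← two_smul k, smul_eq_zero_iff_right two_ne_zero] at h
  calc a * ρ g * b = a * ρ (Equiv.swap (g i) (g j)) * ρ g * b := by
        rw [stabilizerSum_mul_map_swap ρ hfij]
    _ = a * ρ g * (ρ (Equiv.swap i j) * b) := by
        rw [mul_assoc a, ← map_mul, swap_g, map_mul]
        simp only [mul_assoc]
    _ = -(a * ρ g * b) := by rw [map_swap_mul_signed_stabilizerSum ρ hne hcij, mul_neg]

theorem exists_stabilizerSum_character_eq [CharZero k] [FiniteDimensional k W]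
    (ρ : Representation k (Equiv.Perm α) W) (f : α → A) : ∃ m : ℕ, stabilizerSum ρ.character f
      = (Finset.univ.filter fun w : Equiv.Perm α => f ∘ w = f).card * m := by
  let H : Subgroup (Equiv.Perm α) :=
    { carrier := {w | f ∘ w = f}
      one_mem' := rfl
      mul_mem' := fun {v w} hv hw => by
        simp only [Set.mem_ofPred_eq, Equiv.Perm.coe_mul] at *
        rw [← Function.comp_assoc, hv, hw]
      inv_mem' := fun {w} hw => by
        simp only [Set.mem_ofPred_eq] at *
        nth_rewrite 1 [← hw]
        rw [Function.comp_assoc, ← Equiv.Perm.coe_mul, mul_inv_cancel, Equiv.Perm.coe_one,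
          Function.comp_id] }
  have card_ne_zero : (Nat.card H : k) ≠ 0 := Nat.cast_ne_zero.2 Nat.card_pos.ne'
  have := invertibleOfNonzero card_ne_zero
  have mem_H (w : Equiv.Perm α) :
      w ∈ Finset.univ.filter (fun w : Equiv.Perm α => f ∘ w = f) ↔ w ∈ H :=
    Finset.mem_filter_univ w
  have card_H : Nat.card H = (Finset.univ.filter fun w : Equiv.Perm α => f ∘ w = f).card := by
    rw [Nat.card_eq_fintype_card, Fintype.card_of_subtype _ mem_H]
  have sum_H : stabilizerSum ρ.character f = ∑ w : H, character (ρ.comp H.subtype) w :=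
    Finset.sum_subtype _ mem_H _
  refine ⟨Module.finrank k (invariants (ρ.comp H.subtype)), ?_⟩
  rw [← card_H, sum_H, ← inv_mul_eq_iff_eq_mul₀ card_ne_zero]
  exact card_inv_mul_sum_char_eq_finrank _

end Representations

section InducedCharacters

theorem sum_mul_indCF {G : Type} [Group G] [Fintype G] (H : Subgroup G) {χ : G → ℚ}
    (hχ : ∀ g h, χ (h * g * h⁻¹) = χ g) (φ : G → ℚ) :
    ∑ w, χ w * indCF H φ w
      = (Nat.card H : ℚ)⁻¹ * (Fintype.card G * ∑ w with w ∈ H, χ w * φ w) := by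
  have sum_conj (g : G) : ∑ w, χ w * (if g⁻¹ * w * g ∈ H then φ (g⁻¹ * w * g) else 0)
      = ∑ w with w ∈ H, χ w * φ w := by
    rw [Finset.sum_filter]
    refine Fintype.sum_equiv (MulAut.conj g⁻¹).toEquiv _ _ fun w => ?_
    have hχw : χ (g⁻¹ * w * g) = χ w := by simpa only [inv_inv] using hχ w g⁻¹
    simp only [MulEquiv.toEquiv_eq_coe, EquivLike.coe_coe, MulAut.conj_apply, inv_inv, hχw, mul_ite,
      mul_zero]
  simp only [indCF, mul_left_comm (χ _)]
  rw [← Finset.mul_sum]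
  simp only [Finset.mul_sum _ _ (χ _)]
  rw [Finset.sum_comm]
  simp only [sum_conj, Finset.sum_const, Finset.card_univ, nsmul_eq_mul]

theorem stabilizerSum_ne_zero_of_pairS_indCF_ne_zero {n : ℕ} {χ : Equiv.Perm (Fin n) → ℚ}
    (hχ : ∀ g h, χ (h * g * h⁻¹) = χ g) (φ : Equiv.Perm (Fin n) → ℚ) (f : Fin n → ℕ)
    (h : pairS n χ (indCF (youngSubgroup n f) φ) ≠ 0) :
    stabilizerSum (fun w => χ w * φ w) f ≠ 0 := by
  have mem_iff (w : Equiv.Perm (Fin n)) : w ∈ youngSubgroup n f ↔ f ∘ w = f := funext_iff.symm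
  rw [pairS, sum_mul_indCF _ hχ] at h
  simp only [mem_iff] at h
  have hne := right_ne_zero_of_mul (right_ne_zero_of_mul (right_ne_zero_of_mul h))
  convert hne
  exact Finset.sum_congr (by congr!) fun _ _ => rfl

end InducedCharacters

section Dominance

open YoungDiagram

variable {α : Type*} [Fintype α] (μ : YoungDiagram)

theorem sum_range_card_le_sum (s : Finset ℕ) : ∑ i ∈ Finset.range s.card, i ≤ ∑ x ∈ s, x := by
  have h := Finset.sum_range_le_sum (s := s.map Nat.castEmbedding) (c := 0) (by simp)
  rw [Finset.card_map, Finset.sum_map] at h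
  zify
  simpa using h

theorem nInv_eq_sum_cols :
    nInv μ = ∑ k ∈ Finset.range (μ.rowLen 0), ∑ i ∈ Finset.range (μ.colLen k), i := by
  refine Finset.sum_finset_product_right _ _ (fun k => Finset.range (μ.colLen k)) fun c => ?_
  rw [mem_cells, ← Prod.mk.eta (p := c), mem_iff_lt_colLen, Finset.mem_range, Finset.mem_range,
    iff_and_self, ← mem_iff_lt_colLen, ← mem_iff_lt_rowLen]
  exact μ.up_left_mem (Nat.zero_le _) le_rfl

theorem card_filter_col_eq (e : α ≃ μ.cells) (k : ℕ) :
    (Finset.univ.filter fun i => (e i).1.2 = k).card = μ.colLen k := by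
  rw [colLen_eq_card]
  refine Finset.card_bij (fun i _ => (e i).1)
    (fun i hi => mem_col_iff.2 ⟨(e i).2, (Finset.mem_filter_univ i).1 hi⟩)
    (fun i _ j _ h => e.injective (Subtype.ext h)) fun c hc => ?_
  obtain ⟨hcμ, hck⟩ := mem_col_iff.1 hc
  exact ⟨e.symm ⟨c, hcμ⟩, by simp [hck], by simp⟩

theorem nInv_le_sum_of_injective (e : α ≃ μ.cells) {r : α → ℕ}
    (hr : Function.Injective fun i => (r i, (e i).1.2)) : nInv μ ≤ ∑ i, r i := by
  have col_mem (i : α) : (e i).1.2 ∈ Finset.range (μ.rowLen 0) :=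
    Finset.mem_range.2 (mem_iff_lt_rowLen.1 (μ.up_left_mem (Nat.zero_le _) le_rfl (e i).2))
  rw [nInv_eq_sum_cols, ← Finset.sum_fiberwise_of_maps_to fun i _ => col_mem i]
  refine Finset.sum_le_sum fun k _ => ?_
  have injOn_r : Set.InjOn r ↑(Finset.univ.filter fun i => (e i).1.2 = k) := by
    intro i hi j hj h
    rw [Finset.mem_coe, Finset.mem_filter_univ] at hi hj
    exact hr (Prod.ext h (hi.trans hj.symm))
  rw [← card_filter_col_eq μ e k, ← Finset.card_image_of_injOn injOn_r,
    ← Finset.sum_image (f := fun x => x) injOn_r]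
  exact sum_range_card_le_sum _

theorem perm_eq_one_of_sum_rev_mul_le {N : ℕ} {σ : Equiv.Perm (Fin N)}
    (h : ∑ j : Fin N, (j.rev : ℕ) * σ j ≤ ∑ j : Fin N, (j.rev : ℕ) * j) : σ = 1 := by
  have rev_antivary : Antivary (fun j : Fin N => (j.rev : ℕ)) (fun j : Fin N => (j : ℕ)) :=
    fun i j hij => Fin.rev_le_rev.2 (Fin.lt_def.2 hij).le
  have σ_antivary := rev_antivary.sum_mul_eq_sum_mul_comp_perm_iff.1
    (h.antisymm rev_antivary.sum_mul_le_sum_mul_comp_perm)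
  have σ_monotone : Monotone σ := monotone_iff_forall_lt.2 fun i j hij =>
    le_of_not_gt fun hji => hij.not_ge (Fin.rev_le_rev.1 (σ_antivary hji))
  have σ_strictMono : StrictMono σ := σ_monotone.strictMono_of_injective σ.injective
  exact Equiv.coe_fn_injective (σ_strictMono.le_id.antisymm σ_strictMono.id_le)

theorem sum_comp_eq_sum_mul_colorContent {N : ℕ} (g : Fin N → ℕ) (f : α → Fin N) :
    ∑ i, g (f i) = ∑ j, g j * colorContent f j := by
  rw [← Finset.sum_fiberwise Finset.univ f]
  refine Finset.sum_congr rfl fun j _ => ?_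
  rw [Finset.sum_congr rfl fun i hi => congrArg g (Finset.mem_filter.1 hi).2, Finset.sum_const,
    smul_eq_mul, mul_comm, colorContent_apply, Fintype.card_subtype]

theorem perm_eq_one_of_injective {N : ℕ} (hN : μ.colLen 0 ≤ N) (e : α ≃ μ.cells)
    {f : α → Fin N} {σ : Equiv.Perm (Fin N)} {g : Equiv.Perm α}
    (hσ : ∀ j, (σ j : ℕ) + colorContent f j = betaNumber μ j)
    (hg : Function.Injective fun i => (f (g i), (e i).1.2)) : σ = 1 := by
  have hle : nInv μ ≤ ∑ j : Fin N, (j.rev : ℕ) * colorContent f j := by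
    rw [← sum_comp_eq_sum_mul_colorContent (fun j => (j.rev : ℕ)), ← Equiv.sum_comp g]
    refine nInv_le_sum_of_injective μ e fun i j hij => hg ?_
    obtain ⟨hrow, hcol⟩ := Prod.mk.inj hij
    exact Prod.ext (Fin.rev_injective (Fin.ext hrow)) hcol
  have hsum := sum_rev_mul_betaNumber μ hN
  simp only [← hσ, mul_add, Finset.sum_add_distrib] at hsum
  exact perm_eq_one_of_sum_rev_mul_le (by omega)

theorem fiberSizes_eq_rowLens {n : ℕ} {f : Fin n → ℕ}
    (h : ∀ k, (Finset.univ.filter fun i => f i = k).card = μ.rowLen k) :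
    fiberSizes n f = μ.rowLens := by
  have image_eq : Finset.univ.image f = Finset.range (μ.colLen 0) := by
    ext k
    rw [Finset.mem_range, ← mem_iff_lt_colLen, mem_iff_lt_rowLen, ← h k, Finset.card_pos,
      Finset.mem_image, Finset.filter_nonempty_iff]
  simp only [fiberSizes, image_eq, Finset.range_val, Multiset.range, Multiset.map_coe, rowLens, h]

theorem fiberSizes_rev_eq_rowLens {n N : ℕ} (hN : μ.colLen 0 ≤ N) {f : Fin n → Fin N}
    (hf : ∀ j, colorContent f j = μ.rowLen j.rev) :
    fiberSizes n (fun i => ((f i).rev : ℕ)) = μ.rowLens := by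
  refine fiberSizes_eq_rowLens μ fun k => ?_
  by_cases hk : k < N
  · have := hf (Fin.rev ⟨k, hk⟩)
    rw [colorContent_apply, Fintype.card_subtype, Fin.rev_rev] at this
    rw [← this]
    congr! 2 with i
    rw [← Fin.rev_eq_iff, Fin.ext_iff]
  · have rowLen_eq : μ.rowLen k = 0 := by
      by_contra hne
      have := mem_iff_lt_colLen.1 (mem_iff_lt_rowLen.2 (Nat.pos_of_ne_zero hne))
      omega
    rw [rowLen_eq, Finset.card_eq_zero, Finset.filter_eq_empty_iff]
    intro i _ hi
    exact hk (hi ▸ (f i).rev.isLt)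

theorem fiberSizes_col_eq_rowLens_transpose {n : ℕ} (e : Fin n ≃ μ.cells) :
    fiberSizes n (fun i => (e i).1.2) = μ.transpose.rowLens :=
  fiberSizes_eq_rowLens μ.transpose fun k => by rw [rowLen_transpose, card_filter_col_eq]

end Dominance

section CharacterIdentification

theorem character_perm_inv {k α W : Type*} [Field k] [AddCommGroup W] [Module k W] [Finite α]
    (ρ : Representation k (Equiv.Perm α) W) (w : Equiv.Perm α) :
    ρ.character w⁻¹ = ρ.character w := by
  have := Fintype.ofFinite α
  have conj : IsConj w w⁻¹ := by
    rw [Equiv.Perm.isConj_iff_cycleType_eq, Equiv.Perm.cycleType_inv]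
  obtain ⟨c, hc⟩ := isConj_iff.1 conj
  rw [← hc, ρ.char_conj]

theorem eq_of_sum_sq_le_sum_mul {ι R : Type*} [Fintype ι] [CommRing R] [LinearOrder R]
    [IsStrictOrderedRing R] {a b : ι → R} {c : R} (ha : ∑ i, a i ^ 2 = c) (hb : ∑ i, b i ^ 2 = c)
    (hab : c ≤ ∑ i, a i * b i) : a = b := by
  have sum_sub_sq : ∑ i, (a i - b i) ^ 2 = 2 * (c - ∑ i, a i * b i) := by
    simp only [sub_sq, Finset.sum_add_distrib, Finset.sum_sub_distrib, ha, hb, mul_assoc,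
      ← Finset.mul_sum]
    ring
  have sum_sub_sq_eq_zero : ∑ i, (a i - b i) ^ 2 = 0 :=
    le_antisymm (by linarith) (Finset.sum_nonneg fun i _ => sq_nonneg _)
  funext i
  have := (Finset.sum_eq_zero_iff_of_nonneg fun i _ => sq_nonneg _).1 sum_sub_sq_eq_zero i
    (Finset.mem_univ i)
  exact sub_eq_zero.1 (pow_eq_zero_iff two_ne_zero |>.1 this)

variable {k α W : Type*} [Field k] [CharZero k] [AddCommGroup W] [Module k W]
  [FiniteDimensional k W] [Fintype α] [DecidableEq α]

theorem card_stabilizer_le_stabilizerSum {A : Type*} (ρ : Representation k (Equiv.Perm α) W)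
    {χ : Equiv.Perm α → ℤ} (hχ : ∀ w, ρ.character w = χ w) {f : α → A}
    (hf : stabilizerSum χ f ≠ 0) :
    ((Finset.univ.filter fun w : Equiv.Perm α => f ∘ w = f).card : ℤ) ≤ stabilizerSum χ f := by
  obtain ⟨m, hm⟩ := exists_stabilizerSum_character_eq ρ f
  have sum_eq : stabilizerSum χ f
      = (Finset.univ.filter fun w : Equiv.Perm α => f ∘ w = f).card * m := by
    rw [funext hχ, ← intCast_stabilizerSum] at hm
    exact_mod_cast hm
  have hm0 : 0 < m := Nat.pos_of_ne_zero fun h => hf (by rw [sum_eq, h, Nat.cast_zero, mul_zero])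
  rw [sum_eq]
  exact_mod_cast Nat.le_mul_of_pos_right _ hm0

variable {μ : YoungDiagram} {N : ℕ} {φ : Equiv.Perm α → ℤ}

/- By `hvanish` only the identity contributes to Frobenius' alternating sum, and its term is at
least the number of pairs of a colouring of content `λ` and a permutation preserving it. -/
theorem factorial_card_le_sum_mul_frobeniusChar (hN : μ.colLen 0 ≤ N)
    (hcard : μ.card = Fintype.card α)
    (hrow : ∀ f : α → Fin N, (∀ j, colorContent f j = μ.rowLen j.rev) →
      ((Finset.univ.filter fun w : Equiv.Perm α => f ∘ w = f).card : ℤ) ≤ stabilizerSum φ f)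
    (hvanish : ∀ (σ : Equiv.Perm (Fin N)) (f : α → Fin N),
      (∀ j, (σ j : ℕ) + colorContent f j = betaNumber μ j) → stabilizerSum φ f ≠ 0 → σ = 1) :
    ((Fintype.card α).factorial : ℤ) ≤
      ∑ w, φ w * frobeniusChar (Finsupp.equivFunOnFinite.symm (betaNumber μ : Fin N → ℕ)) w := by
  let m : Fin N →₀ ℕ := Finsupp.equivFunOnFinite.symm fun j => μ.rowLen j.rev
  have sum_m : ∑ j, m j = Fintype.card α := by
    rw [← hcard]
    exact sum_rowLen_rev μ hN
  have content_iff (f : α → Fin N) : colorContent f = m ↔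
      ∀ j, ((1 : Equiv.Perm (Fin N)) j : ℕ) + colorContent f j = betaNumber μ j := by
    simp [m, betaNumber, Finsupp.ext_iff]
  rw [sum_mul_frobeniusChar, Finset.sum_eq_single 1]
  · calc ((Fintype.card α).factorial : ℤ)
        = ∑ f : α → Fin N with colorContent f = m,
            ((Finset.univ.filter fun w : Equiv.Perm α => f ∘ w = f).card : ℤ) := by
          rw [← sum_card_stabilizer m sum_m, Nat.cast_sum]
          congr!
      _ ≤ ∑ f : α → Fin N with colorContent f = m, stabilizerSum φ f :=
          Finset.sum_le_sum fun f hf => by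
            convert hrow f (DFunLike.ext_iff.1 (Finset.mem_filter.1 hf).2)
      _ = _ := by
          rw [Equiv.Perm.sign_one, Units.val_one, one_mul]
          exact Finset.sum_congr (Finset.filter_congr fun f _ => content_iff f) fun _ _ => rfl
  · intro σ _ hσ
    rw [Finset.sum_eq_zero, mul_zero]
    intro f hf
    exact by_contra fun h => hσ (hvanish σ f ((Finset.mem_filter_univ f).1 hf) h)
  · exact fun h => absurd (Finset.mem_univ _) h

theorem eq_frobeniusChar_betaNumber (ρ : Representation k (Equiv.Perm α) W)
    {χ : Equiv.Perm α → ℤ} (hχ : ∀ w, ρ.character w = χ w)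
    (hnorm : ∑ w, χ w ^ 2 = (Fintype.card α).factorial) (hN : μ.colLen 0 ≤ N) (e : α ≃ μ.cells)
    (hrow : ∀ f : α → Fin N, (∀ j, colorContent f j = μ.rowLen j.rev) → stabilizerSum χ f ≠ 0)
    (hcol : stabilizerSum (fun w => (Equiv.Perm.sign w : ℤ) * χ w) (fun i => (e i).1.2) ≠ 0) :
    χ = frobeniusChar (Finsupp.equivFunOnFinite.symm (betaNumber μ : Fin N → ℕ)) := by
  have hcard : μ.card = Fintype.card α := by
    rw [Fintype.card_congr e, Fintype.card_coe]
  have hρ : Module.finrank k (Representation.IntertwiningMap ρ ρ) = 1 := by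
    refine finrank_intertwiningMap_self_eq_one ρ ?_
    simp only [character_perm_inv ρ]
    simp only [hχ, ← sq, Nat.card_eq_fintype_card, Fintype.card_perm]
    exact_mod_cast hnorm
  have hcol' : stabilizerSum (fun w => (Equiv.Perm.sign w : ℤ) • ρ.character w)
      (fun i => (e i).1.2) ≠ 0 := by
    simp only [hχ, zsmul_eq_mul, ← Int.cast_mul]
    rwa [← intCast_stabilizerSum, Int.cast_ne_zero]
  have norm_frobeniusChar := sum_frobeniusChar_sq (α := α)
    (Finsupp.equivFunOnFinite.symm (betaNumber μ : Fin N → ℕ)) (hcard ▸ sum_betaNumber μ hN)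
    (betaNumber_strictMono μ).injective
  refine eq_of_sum_sq_le_sum_mul hnorm norm_frobeniusChar
    (factorial_card_le_sum_mul_frobeniusChar hN hcard (fun f hf => ?_) fun σ f hσ hf => ?_)
  · convert card_stabilizer_le_stabilizerSum ρ hχ (hrow f hf)
  have hf' : stabilizerSum ρ.character f ≠ 0 := by
    rwa [funext hχ, ← intCast_stabilizerSum, Int.cast_ne_zero]
  obtain ⟨g, hg⟩ := exists_perm_injective_prodMk ρ hρ f _ hf' hcol'
  exact perm_eq_one_of_injective μ hN e hσ hg

theorem eq_frobeniusChar_of_isIrrCharOf {n : ℕ} {χ : Equiv.Perm (Fin n) → ℤ}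
    (hN : μ.colLen 0 ≤ N) (hcard : μ.card = n)
    (hχ : IsIrrCharOf n (μ.rowLens : Multiset ℕ) (μ.transpose.rowLens : Multiset ℕ) χ) :
    χ = frobeniusChar (Finsupp.equivFunOnFinite.symm (betaNumber μ : Fin N → ℕ)) := by
  obtain ⟨⟨V, hV⟩, hnorm, hrow, hcol⟩ := hχ
  have χ_conj (g h : Equiv.Perm (Fin n)) : (χ (h * g * h⁻¹) : ℚ) = χ g := by
    have := V.char_conj g h
    rw [hV, hV] at this
    exact_mod_cast this
  let e : Fin n ≃ μ.cells := Fintype.equivOfCardEq (by simp [← hcard])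
  refine eq_frobeniusChar_betaNumber V.ρ hV ?_ hN e (fun f hf => ?_) ?_
  · rw [pairS, inv_mul_eq_one₀ (Nat.cast_ne_zero.2 n.factorial_ne_zero)] at hnorm
    simp only [Fintype.card_fin, sq]
    exact_mod_cast hnorm.symm
  · have := stabilizerSum_ne_zero_of_pairS_indCF_ne_zero χ_conj _ _
      (hrow _ (fiberSizes_rev_eq_rowLens μ hN hf))
    simp only [mul_one] at this
    rw [← intCast_stabilizerSum, Int.cast_ne_zero] at this
    exact stabilizerSum_comp χ f (Fin.val_injective.comp Fin.rev_injective) ▸ this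
  · have := stabilizerSum_ne_zero_of_pairS_indCF_ne_zero χ_conj _ _
      (hcol _ (fiberSizes_col_eq_rowLens_transpose μ e))
    simp only [← Int.cast_mul, mul_comm (χ _)] at this
    rwa [← intCast_stabilizerSum, Int.cast_ne_zero] at this

end CharacterIdentification

section HookContent

variable {α : Type*} [Fintype α] [DecidableEq α] {μ : YoungDiagram}

theorem sum_frobeniusChar_mul_powerSum_geometric {R : Type*} [CommRing R] [IsDomain R] {N : ℕ}
    (hN : μ.colLen 0 ≤ N) (hcard : μ.card = Fintype.card α) {q : R}
    (hq : Function.Injective fun k : ℕ => q ^ k) :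
    (∑ w : Equiv.Perm α,
        (frobeniusChar (Finsupp.equivFunOnFinite.symm (betaNumber μ : Fin N → ℕ)) w : R) *
          powerSum w fun k : Fin N => q ^ (k : ℕ)) * ∏ c ∈ μ.cells, (1 - q ^ hookLen μ c)
      = (Fintype.card α).factorial * (q ^ nInv μ * ∏ c ∈ μ.cells, (1 - q ^ (N + c.2 - c.1))) := by
  let l : Fin N →₀ ℕ := Finsupp.equivFunOnFinite.symm (betaNumber μ : Fin N → ℕ)
  have vandermonde_ne_zero : (Matrix.vandermonde fun i : Fin N => q ^ (i : ℕ)).det ≠ 0 :=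
    Matrix.det_vandermonde_ne_zero_iff.2 (hq.comp Fin.val_injective)
  have alternant_eq : (Matrix.of fun i j : Fin N => (q ^ (i : ℕ)) ^ l j).det
      = (Matrix.vandermonde fun i : Fin N => q ^ betaNumber μ i).det := by
    rw [← Matrix.det_transpose]
    congr 1
    ext i j
    exact pow_right_comm q j (betaNumber μ i)
  have frobenius := sum_frobeniusChar_mul_powerSum (α := α) (fun i : Fin N => q ^ (i : ℕ)) l
    (hcard ▸ sum_betaNumber μ hN)
  simp only [mul_left_comm _ (Matrix.det _)] at frobenius
  rw [alternant_eq, ← Finset.mul_sum] at frobenius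
  refine mul_left_cancel₀ vandermonde_ne_zero ?_
  linear_combination (∏ c ∈ μ.cells, (1 - q ^ hookLen μ c)) * frobenius +
    ((Fintype.card α).factorial : R) * prod_hookLen_mul_det_vandermonde μ q hN

variable {K : Type*} [Field K] {t : K}

theorem one_sub_pow_ne_zero (ht : Function.Injective fun k : ℕ => t ^ k) {m : ℕ} (hm : m ≠ 0) :
    1 - t ^ m ≠ 0 :=
  sub_ne_zero.2 fun h => hm (ht ((h.symm.trans (pow_zero t).symm)))

theorem ne_zero_of_injective_pow (ht : Function.Injective fun k : ℕ => t ^ k) : t ≠ 0 := by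
  rintro rfl
  exact absurd (@ht 1 2 (by simp)) (by norm_num)

theorem det_one_sub_smul_permMatrix_ne_zero (ht : Function.Injective fun k : ℕ => t ^ k)
    (w : Equiv.Perm α) : (1 - t • w.permMatrix K).det ≠ 0 := by
  rw [det_one_sub_smul_permMatrix, Finset.prod_ne_zero_iff]
  exact fun o _ => one_sub_pow_ne_zero ht (cycleLength_pos w o).ne'

theorem prod_one_sub_pow_hookLen_ne_zero (ht : Function.Injective fun k : ℕ => t ^ k) :
    ∏ c ∈ μ.cells, (1 - t ^ hookLen μ c) ≠ 0 :=
  Finset.prod_ne_zero_iff.2 fun _ hc => one_sub_pow_ne_zero ht (hookLen_pos μ hc).ne'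

theorem det_one_add_smul_permMatrix {R : Type*} [CommRing R] (w : Equiv.Perm α) (s : R) :
    (1 + s • w.permMatrix R).det = ∏ o : CycleQuotient w, (1 - (-s) ^ cycleLength w o) := by
  rw [← det_one_sub_smul_permMatrix, neg_smul, sub_neg_eq_add]

theorem pow_add_sub_eq_mul_zpow_content (ht : t ≠ 0) {N : ℕ} (hN : μ.colLen 0 ≤ N) {c : ℕ × ℕ}
    (hc : c ∈ μ.cells) : t ^ (N + c.2 - c.1) = t ^ N * t ^ content c := by
  have hrow : c.1 < μ.colLen c.2 := YoungDiagram.mem_iff_lt_colLen.1 hc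
  have hle := μ.colLen_anti 0 c.2 (Nat.zero_le _)
  rw [← zpow_natCast, ← zpow_natCast, ← zpow_add₀ ht, content]
  congr 1
  omega

variable {χ : Equiv.Perm α → ℤ}

theorem sum_mul_det_div_det_neg_pow {N : ℕ} (ht : Function.Injective fun k : ℕ => t ^ k)
    (hN : μ.colLen 0 ≤ N) (hcard : μ.card = Fintype.card α)
    (hχ : χ = frobeniusChar (Finsupp.equivFunOnFinite.symm (betaNumber μ : Fin N → ℕ))) :
    ∑ w, (χ w : K) * (1 + -t ^ N • w.permMatrix K).det / (1 - t • w.permMatrix K).det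
      = (Fintype.card α).factorial * (t ^ nInv μ * (∏ c ∈ μ.cells, (1 + -t ^ N * t ^ content c)) /
          ∏ c ∈ μ.cells, (1 - t ^ hookLen μ c)) := by
  have det_ratio (w : Equiv.Perm α) :
      (χ w : K) * (1 + -t ^ N • w.permMatrix K).det / (1 - t • w.permMatrix K).det
        = χ w * powerSum w fun k : Fin N => t ^ (k : ℕ) := by
    rw [neg_smul, ← sub_eq_add_neg, ← powerSum_geometric_mul_det, ← mul_assoc,
      mul_div_cancel_right₀ _ (det_one_sub_smul_permMatrix_ne_zero ht w)]
  have content_eq : ∏ c ∈ μ.cells, (1 + -t ^ N * t ^ content c)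
      = ∏ c ∈ μ.cells, (1 - t ^ (N + c.2 - c.1)) :=
    Finset.prod_congr rfl fun c hc => by
      rw [pow_add_sub_eq_mul_zpow_content (ne_zero_of_injective_pow ht) hN hc, neg_mul,
        sub_eq_add_neg]
  simp only [det_ratio, content_eq]
  rw [← mul_div_assoc, eq_div_iff (prod_one_sub_pow_hookLen_ne_zero ht), hχ,
    sum_frobeniusChar_mul_powerSum_geometric hN hcard ht]

theorem sum_mul_det_div_det (ht : Function.Injective fun k : ℕ => t ^ k)
    (hcard : μ.card = Fintype.card α)
    (hχ : ∀ N, μ.colLen 0 ≤ N →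
      χ = frobeniusChar (Finsupp.equivFunOnFinite.symm (betaNumber μ : Fin N → ℕ))) (s : K) :
    ∑ w, (χ w : K) * (1 + s • w.permMatrix K).det / (1 - t • w.permMatrix K).det
      = (Fintype.card α).factorial * (t ^ nInv μ * (∏ c ∈ μ.cells, (1 + s * t ^ content c)) /
          ∏ c ∈ μ.cells, (1 - t ^ hookLen μ c)) := by
  let P : Polynomial K := ∑ w, Polynomial.C (χ w / (1 - t • w.permMatrix K).det) *
    (1 + (Polynomial.X : Polynomial K) • w.permMatrix (Polynomial K)).det
  let Q : Polynomial K := Polynomial.C ((Fintype.card α).factorial * (t ^ nInv μ /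
    ∏ c ∈ μ.cells, (1 - t ^ hookLen μ c))) *
      ∏ c ∈ μ.cells, (1 + Polynomial.X * Polynomial.C (t ^ content c))
  have eval_P (x : K) : P.eval x
      = ∑ w, (χ w : K) * (1 + x • w.permMatrix K).det / (1 - t • w.permMatrix K).det := by
    simp only [P, det_one_add_smul_permMatrix, Polynomial.eval_finsetSum, Polynomial.eval_mul,
      Polynomial.eval_C, Polynomial.eval_prod, Polynomial.eval_sub, Polynomial.eval_one,
      Polynomial.eval_pow, Polynomial.eval_neg, Polynomial.eval_X, mul_div_right_comm]
  have eval_Q (x : K) : Q.eval x = (Fintype.card α).factorial *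
      (t ^ nInv μ * (∏ c ∈ μ.cells, (1 + x * t ^ content c)) /
        ∏ c ∈ μ.cells, (1 - t ^ hookLen μ c)) := by
    simp only [Q, Polynomial.eval_mul, Polynomial.eval_C, Polynomial.eval_prod,
      Polynomial.eval_add, Polynomial.eval_one, Polynomial.eval_X, mul_div_right_comm, mul_assoc]
  have eval_eq (k : ℕ) : P.eval (-t ^ (μ.colLen 0 + k)) = Q.eval (-t ^ (μ.colLen 0 + k)) := by
    have hN := Nat.le_add_right (μ.colLen 0) k
    rw [eval_P, eval_Q, sum_mul_det_div_det_neg_pow ht hN hcard (hχ _ hN)]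
  have P_eq_Q : P = Q := Polynomial.eq_of_infinite_eval_eq _ _ <|
    Set.infinite_of_injective_forall_mem
      (neg_injective.comp (ht.comp (add_right_injective (μ.colLen 0)))) eval_eq
  rw [← eval_P, P_eq_Q, eval_Q]

end HookContent

theorem permM_eq_transpose_permMatrix (n : ℕ) (w : Equiv.Perm (Fin n)) :
    permM n w = (w.permMatrix F).transpose := by
  ext i j
  simp [permM, Equiv.Perm.permMatrix, PEquiv.toMatrix_apply]

theorem injective_pow_tt : Function.Injective fun k : ℕ => tt ^ k := by
  have injective_pow_X : Function.Injective fun k : ℕ => (RatFunc.X : RatFunc ℚ) ^ k := by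
    intro a b h
    simp only [← RatFunc.algebraMap_X, ← map_pow] at h
    simpa using congrArg Polynomial.natDegree (RatFunc.algebraMap_injective ℚ h)
  intro a b h
  simp only [tt, ← map_pow] at h
  exact injective_pow_X (RatFunc.C.injective h)

theorem statement6_general {K : Type*} [Field K] {s t : K}
    (ht : Function.Injective fun k : ℕ => t ^ k) {n : ℕ} {μ : YoungDiagram} (hcard : μ.card = n)
    {χ : Equiv.Perm (Fin n) → ℤ}
    (hχ : IsIrrCharOf n (μ.rowLens : Multiset ℕ) (μ.transpose.rowLens : Multiset ℕ) χ) :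
    ∑ w, (χ w : K) * (1 + s • w.permMatrix K).det / (1 - t • w.permMatrix K).det
      = n.factorial * (t ^ nInv μ * (∏ c ∈ μ.cells, (1 + s * t ^ content c)) /
          ∏ c ∈ μ.cells, (1 - t ^ hookLen μ c)) := by
  have h := sum_mul_det_div_det ht (hcard.trans (Fintype.card_fin n).symm)
    (fun N hN => eq_frobeniusChar_of_isIrrCharOf hN hcard hχ) s
  rwa [Fintype.card_fin] at h

/-- hook–content formula for `g_λ(t,s)`.  `μ` is the Young diagram of
`λ ⊢ n` and `χ` the character of `σ_λ`. -/
theorem statement6 (n : ℕ) (μ : YoungDiagram) (hcard : μ.card = n)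
    (χ : Equiv.Perm (Fin n) → ℤ)
    (hχ : IsIrrCharOf n (↑μ.rowLens : Multiset ℕ) (↑μ.transpose.rowLens : Multiset ℕ) χ) :
    ((n.factorial : F))⁻¹ *
        ∑ w : Equiv.Perm (Fin n), ((χ w : ℤ) : F) *
          Matrix.det ((1 : Matrix (Fin n) (Fin n) F) + ss • permM n w) /
          Matrix.det ((1 : Matrix (Fin n) (Fin n) F) - tt • permM n w)
      = tt ^ nInv μ * (∏ c ∈ μ.cells, (1 + ss * tt ^ content c)) /
          ∏ c ∈ μ.cells, (1 - tt ^ hookLen μ c) := by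
  rw [inv_mul_eq_iff_eq_mul₀ (Nat.cast_ne_zero.2 n.factorial_ne_zero),
    ← statement6_general injective_pow_tt hcard hχ]
  refine Finset.sum_congr rfl fun w _ => ?_
  rw [← Matrix.det_transpose, ← Matrix.det_transpose (1 - _)]
  simp only [permM_eq_transpose_permMatrix, Matrix.transpose_add, Matrix.transpose_sub,
    Matrix.transpose_smul, Matrix.transpose_one, Matrix.transpose_transpose]
end
end

section
/- The map σ_λ ↦ [λ×∅] induces an isometric isomorphism between (R(S_n), character pairing) and (R̄(W(B_n)), elliptic pairing); in particular {[λ×∅] : λ ⊢ n} is an orthonormal basis of the space of virtual elliptic representations of W(B_n). -/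
set_option maxHeartbeats 1000000
set_option synthInstance.maxHeartbeats 400000

/-!
STATEMENT 8: the map `σ_λ ↦ [λ×∅]` (pullback through `W(B_n) → S_n`) induces an
isometric isomorphism between `(R(S_n), ⟨,⟩)` and `(R̄(W(B_n)), ⟨,⟩^el)`; in
particular the `[λ×∅]`, `λ ⊢ n`, form an orthonormal basis of the space of virtual
elliptic representations of `W(B_n)` (class functions modulo the radical of the
elliptic pairing).
-/

open scoped BigOperators Classical

noncomputable section

/-- an element of `W(B_n)`. -/
abbrev BElt (n : ℕ) := Equiv.Perm (Fin n) × (Fin n → Bool)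

/-- the signed permutation matrix of `p ∈ W(B_n)`, over `ℚ`. -/
def BMatQ (n : ℕ) (p : BElt n) : Matrix (Fin n) (Fin n) ℚ :=
  Matrix.of fun i j => if p.1 j = i then (if p.2 j then -1 else 1) else 0

/-- conjugacy in `W(B_n)`. -/
def ConjB (n : ℕ) (p p' : BElt n) : Prop :=
  ∃ r : BElt n, BMatQ n r * BMatQ n p = BMatQ n p' * BMatQ n r

/-- class functions on `W(B_n)`. -/
def IsClassFnB (n : ℕ) (σ : BElt n → ℚ) : Prop :=
  ∀ p p' : BElt n, ConjB n p p' → σ p = σ p'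

/-- the elliptic pairing of `W(B_n)`, with `det_E(1-w)` on the reflection
representation `E = ℚ^n`. -/
def ellB (n : ℕ) (σ σ' : BElt n → ℚ) : ℚ :=
  ((Fintype.card (BElt n) : ℚ))⁻¹ *
    ∑ p : BElt n, σ p * σ' p *
      Matrix.det ((1 : Matrix (Fin n) (Fin n) ℚ) - BMatQ n p)

/-- membership in the radical of the elliptic pairing on class functions of `W(B_n)`. -/
def InRadicalB (n : ℕ) (σ : BElt n → ℚ) : Prop :=
  IsClassFnB n σ ∧ ∀ σ' : BElt n → ℚ, IsClassFnB n σ' → ellB n σ σ' = 0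

/-!
Averaging `det (1 - w)` over the `2 ^ n` sign patterns above a permutation gives `1`, because the
determinant is multilinear in the columns and the signs cancel; so the elliptic pairing of two
functions pulled back from `S_n` is their ordinary pairing. The pullbacks exhaust the class
functions modulo the radical: only elliptic elements contribute to the pairing, all cycles of such
an element are negative, and two signed permutations whose cycles are all negative are conjugate as
soon as the underlying permutations are.

It remains that the `χ_λ` are orthonormal. A representation containing both the trivial character of
a Young subgroup of type `λ` and the sign character of one of type `μᵗ`, if irreducible, has a
nonzero product (antisymmetrizer) * `g` * (symmetrizer); then no transposition lies both in the one
subgroup and in the conjugate of the other, so every row of `λ` meets every column of `μ` at most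
once. This makes `λ` dominated by `μ`, hence `χ_λ` determines `λ`.
-/

open Function in
theorem birkhoffSum_eq_of_iterate_eq {α M : Type*} [AddCommMonoid M] {f : α → α} {g : α → M}
    {x : α} (hx : x ∈ periodicPts f) (hsum : birkhoffSum f g (minimalPeriod f x) x = 0)
    {k l : ℕ} (hkl : f^[k] x = f^[l] x) : birkhoffSum f g k x = birkhoffSum f g l x := by
  have hperiodic : Function.Periodic (fun k => birkhoffSum f g k x) (minimalPeriod f x) :=
    fun k => by simp only [add_comm k, birkhoffSum_add, hsum, iterate_minimalPeriod, zero_add]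
  have hmod : k % minimalPeriod f x = l % minimalPeriod f x :=
    iterate_injOn_Iio_minimalPeriod (Nat.mod_lt k (minimalPeriod_pos_of_mem_periodicPts hx))
      (Nat.mod_lt l (minimalPeriod_pos_of_mem_periodicPts hx))
      (by simpa only [iterate_mod_minimalPeriod_eq] using hkl)
  rw [← hperiodic.map_mod_nat k, hmod, hperiodic.map_mod_nat l]

section CohomologicalEquation

open Equiv.Perm Function

variable {α A : Type*} [Finite α] [AddCommMonoid A] {w : Equiv.Perm α} {c : α → A}

theorem exists_apply_eq_add_of_sameCycle {x : α}
    (hx : birkhoffSum w c (minimalPeriod w x) x = 0) :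
    ∃ d : α → A, ∀ y, w.SameCycle x y → d (w y) = d y + c y := by
  have hiterate : ∀ y, w.SameCycle x y → ∃ k : ℕ, w^[k] x = y := fun y hy => by
    simpa only [iterate_eq_pow] using hy.exists_nat_pow_eq
  choose! k hk using hiterate
  refine ⟨fun y => birkhoffSum w c (k y) x, fun y hy => ?_⟩
  have hstep : w^[k (w y)] x = w^[k y + 1] x := by
    rw [hk (w y) (sameCycle_apply_right.2 hy), iterate_succ_apply', hk y hy]
  calc birkhoffSum w c (k (w y)) x = birkhoffSum w c (k y + 1) x :=
        birkhoffSum_eq_of_iterate_eq (w.injective.mem_periodicPts x) hx hstep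
    _ = birkhoffSum w c (k y) x + c y := by rw [birkhoffSum_succ, hk y hy]

theorem exists_apply_eq_add (hc : ∀ x, birkhoffSum w c (minimalPeriod w x) x = 0) :
    ∃ d : α → A, ∀ x, d (w x) = d x + c x := by
  choose d hd using fun x => exists_apply_eq_add_of_sameCycle (hc x)
  let rep (x : α) : α := Quotient.out (Quotient.mk (SameCycle.setoid w) x)
  have hrep (x : α) : w.SameCycle (rep x) x := Quotient.mk_out (s := SameCycle.setoid w) x
  have hrep_apply (x : α) : rep (w x) = rep x :=
    congrArg Quotient.out <| Quotient.sound (s := SameCycle.setoid w) <|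
      sameCycle_apply_left.2 (SameCycle.refl w x)
  exact ⟨fun x => d (rep x) x, fun x => by simpa only [hrep_apply] using hd _ x (hrep x)⟩

end CohomologicalEquation

section SignedPermutations

variable {n : ℕ}

theorem BMatQ_mulVec_apply (p : BElt n) (v : Fin n → ℚ) (j : Fin n) :
    (BMatQ n p).mulVec v (p.1 j) = (if p.2 j then -1 else 1) * v j := by
  simp [BMatQ, Matrix.mulVec, dotProduct]

theorem BMatQ_mul (p q : BElt n) :
    BMatQ n p * BMatQ n q = BMatQ n (p.1 * q.1, fun j => p.2 (q.1 j) ^^ q.2 j) := by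
  ext i j
  rw [Matrix.mul_apply, Finset.sum_eq_single (q.1 j)]
  · by_cases hp : p.2 (q.1 j) <;> by_cases hq : q.2 j <;> by_cases hi : p.1 (q.1 j) = i <;>
      simp [BMatQ, hp, hq, hi]
  · intro k _ hk
    simp [BMatQ, hk.symm]
  · simp

theorem BMatQ_injective : Function.Injective (BMatQ n) := by
  intro p q hpq
  have hentry (j : Fin n) : (if q.1 j = p.1 j then (if q.2 j then (-1 : ℚ) else 1) else 0) =
      if p.2 j then -1 else 1 := by
    simpa [BMatQ] using (congrFun (congrFun hpq (p.1 j)) j).symm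
  refine Prod.ext (Equiv.ext fun j => ?_) (funext fun j => ?_)
  · specialize hentry j
    grind
  · specialize hentry j
    grind

theorem conjB_iff {p q : BElt n} :
    ConjB n p q ↔ ∃ r : BElt n, r.1 * p.1 = q.1 * r.1 ∧
      ∀ j, (r.2 (p.1 j) ^^ p.2 j) = (q.2 (r.1 j) ^^ r.2 j) := by
  simp only [ConjB, BMatQ_mul, BMatQ_injective.eq_iff, Prod.mk.injEq, funext_iff]

theorem ConjB.isConj {p q : BElt n} (h : ConjB n p q) : IsConj p.1 q.1 := by
  obtain ⟨r, hr, -⟩ := conjB_iff.1 h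
  exact isConj_iff.2 ⟨r.1, mul_inv_eq_of_eq_mul hr⟩

theorem sum_det_sub_mul_diagonal {ι κ R : Type*} [Fintype ι] [DecidableEq ι] [Fintype κ]
    [CommRing R] (A B : Matrix ι ι R) {d : κ → R} (hd : ∑ k, d k = 0) :
    ∑ e : ι → κ, (A - B * Matrix.diagonal (d ∘ e)).det =
      (Fintype.card κ : R) ^ Fintype.card ι * A.det := by
  let rows (i : ι) (k : κ) : ι → R := A.transpose i - d k • B.transpose i
  calc ∑ e : ι → κ, (A - B * Matrix.diagonal (d ∘ e)).det
      = ∑ e : ι → κ, Matrix.detRowAlternating fun i => rows i (e i) := by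
        refine Finset.sum_congr rfl fun e _ => ?_
        rw [← Matrix.det_transpose]
        refine congrArg Matrix.det ?_
        ext i j
        simp [rows, mul_comm]
    _ = Matrix.detRowAlternating fun i => ∑ k, rows i k :=
        (Matrix.detRowAlternating.toMultilinearMap.map_sum rows).symm
    _ = ((Fintype.card κ : R) • A.transpose).det := by
        refine congrArg Matrix.det ?_
        ext i j
        simp [rows, ← Finset.sum_mul, hd]
    _ = (Fintype.card κ : R) ^ Fintype.card ι * A.det := by
        rw [Matrix.det_smul, Matrix.det_transpose]

theorem sum_det_one_sub_BMatQ (w : Equiv.Perm (Fin n)) :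
    ∑ e : Fin n → Bool, (1 - BMatQ n (w, e)).det = 2 ^ n := by
  have hfactor (e : Fin n → Bool) : BMatQ n (w, e) =
      BMatQ n (w, fun _ => false) * Matrix.diagonal ((fun b => if b then -1 else 1) ∘ e) := by
    ext i j
    by_cases hij : w j = i <;> simp [BMatQ, hij]
  rw [Finset.sum_congr rfl fun e _ => by rw [hfactor e],
    sum_det_sub_mul_diagonal 1 _ (by simp)]
  simp only [Fintype.card_bool, Fintype.card_fin, Matrix.det_one, mul_one, Nat.cast_ofNat]

theorem ellB_comp_fst (a b : Equiv.Perm (Fin n) → ℚ) :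
    ellB n (fun p => a p.1) (fun p => b p.1) = pairS n a b := by
  simp only [ellB, pairS, Fintype.sum_prod_type, ← Finset.mul_sum, sum_det_one_sub_BMatQ,
    ← Finset.sum_mul]
  simp only [Fintype.card_prod, Fintype.card_perm, Fintype.card_fin, Fintype.card_pi,
    Fintype.card_bool, Finset.prod_const, Finset.card_univ]
  push_cast
  field_simp

/-- A signed permutation is elliptic if it fixes no nonzero vector of the reflection
representation, that is, if it contributes to the elliptic pairing. -/
def IsElliptic (p : BElt n) : Prop :=
  (1 - BMatQ n p).det ≠ 0

/-- The sign, written additively, of the cycle of `x` in the signed permutation `p`: the sum of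
the sign bits along that cycle. -/
def cycleSign (p : BElt n) (x : Fin n) : ZMod 2 :=
  birkhoffSum p.1 (fun j => if p.2 j then 1 else 0) (Function.minimalPeriod p.1 x) x

theorem IsElliptic.cycleSign_eq_one {p : BElt n} (hp : IsElliptic p) (x : Fin n) :
    cycleSign p x = 1 := by
  by_contra hx
  have hzero : cycleSign p x = 0 := (by decide : ∀ a : ZMod 2, a ≠ 1 → a = 0) _ hx
  obtain ⟨d, hd⟩ := exists_apply_eq_add_of_sameCycle hzero
  let v (j : Fin n) : ℚ := if p.1.SameCycle x j then (if d j = 0 then 1 else -1) else 0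
  have hv : v x ≠ 0 := by
    simp only [v, Equiv.Perm.SameCycle.refl, if_true]
    split_ifs <;> norm_num
  have hfixed : (BMatQ n p).mulVec v = v := by
    refine funext (p.1.surjective.forall.2 fun j => ?_)
    rw [BMatQ_mulVec_apply]
    by_cases hj : p.1.SameCycle x j
    · have hbit : ∀ (a : ZMod 2) (b : Bool), a + (if b then 1 else 0) = 0 ↔ (b ↔ a ≠ 0) := by
        decide
      have hstep : d (p.1 j) = 0 ↔ (p.2 j ↔ d j ≠ 0) := by rw [hd j hj, hbit]
      by_cases hdj : d j = 0 <;> cases hpj : p.2 j <;>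
        simp [v, hj, Equiv.Perm.sameCycle_apply_right, hstep, hdj, hpj]
    · simp [v, hj, Equiv.Perm.sameCycle_apply_right]
  refine hp (Matrix.exists_mulVec_eq_zero_iff.1 ⟨v, fun h => hv (congrFun h x), ?_⟩)
  rw [Matrix.sub_mulVec, Matrix.one_mulVec, hfixed, sub_self]

theorem conjB_of_isConj {p q : BElt n} (hp : IsElliptic p) (hq : IsElliptic q)
    (hpq : IsConj p.1 q.1) : ConjB n p q := by
  obtain ⟨v, hv⟩ := isConj_iff.1 hpq
  have hsemiconj : Function.Semiconj v p.1 q.1 := fun j => by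
    rw [← Equiv.Perm.mul_apply, ← Equiv.Perm.mul_apply, ← hv, inv_mul_cancel_right]
  let bit (b : Bool) : ZMod 2 := if b then 1 else 0
  have hcycle (x : Fin n) : birkhoffSum p.1 (fun j => bit (p.2 j) + bit (q.2 (v j)))
      (Function.minimalPeriod p.1 x) x = 0 := by
    have hperiod : Function.minimalPeriod p.1 x = Function.minimalPeriod q.1 (v x) :=
      Function.minimalPeriod_eq_minimalPeriod_iff.2 fun k => by
        rw [Function.IsPeriodicPt, Function.IsPeriodicPt, Function.IsFixedPt, Function.IsFixedPt,
          ← (hsemiconj.iterate_right k).eq, v.injective.eq_iff]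
    have hsum : birkhoffSum p.1 (fun j => bit (q.2 (v j))) (Function.minimalPeriod p.1 x) x =
        cycleSign q (v x) := by
      rw [cycleSign, hperiod]
      exact Finset.sum_congr rfl fun k _ => by
        simp only [bit, (hsemiconj.iterate_right k).eq]
    calc _ = cycleSign p x + cycleSign q (v x) := by
          rw [← hsum, cycleSign]
          exact birkhoffSum_add' ..
      _ = 0 := by rw [hp.cycleSign_eq_one, hq.cycleSign_eq_one, CharTwo.add_self_eq_zero]
  obtain ⟨d, hd⟩ := exists_apply_eq_add hcycle
  refine conjB_iff.2 ⟨(v, fun j => decide (d j = 1)), mul_inv_eq_iff_eq_mul.1 hv, fun j => ?_⟩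
  have hxor : ∀ (a : ZMod 2) (b b' : Bool),
      (decide (a + (bit b + bit b') = 1) ^^ b) = (b' ^^ decide (a = 1)) := by decide
  simpa only [hd j] using hxor (d j) (p.2 j) (q.2 (v j))

theorem exists_isElliptic (w : Equiv.Perm (Fin n)) : ∃ e, IsElliptic (w, e) := by
  by_contra! hnone
  have hzero : ∑ e : Fin n → Bool, (1 - BMatQ n (w, e)).det = 0 :=
    Finset.sum_eq_zero fun e _ => not_not.1 (hnone e)
  exact absurd (sum_det_one_sub_BMatQ w ▸ hzero) (by positivity)

theorem IsClassFnB.exists_eq_comp_fst {σ : BElt n → ℚ} (hσ : IsClassFnB n σ) :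
    ∃ φ : Equiv.Perm (Fin n) → ℚ, (∀ w w', IsConj w w' → φ w = φ w') ∧
      ∀ p, IsElliptic p → σ p = φ p.1 := by
  choose e he using exists_isElliptic (n := n)
  exact ⟨fun w => σ (w, e w), fun w w' h => hσ _ _ (conjB_of_isConj (he w) (he w') h),
    fun p hp => hσ _ _ (conjB_of_isConj hp (he p.1) (IsConj.refl _))⟩

theorem inRadicalB_of_forall_isElliptic {σ : BElt n → ℚ} (hσ : IsClassFnB n σ)
    (hzero : ∀ p, IsElliptic p → σ p = 0) : InRadicalB n σ := by
  refine ⟨hσ, fun σ' _ => mul_eq_zero_of_right _ (Finset.sum_eq_zero fun p _ => ?_)⟩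
  by_cases hp : IsElliptic p
  · rw [hzero p hp, zero_mul, zero_mul]
  · rw [not_not.1 hp, mul_zero]

end SignedPermutations

section Irreducible

open Representation

theorem isSimpleModule_of_finrank_end_eq_one (k : Type*) {A M : Type*} [Field k] [Ring A]
    [Algebra k A] [AddCommGroup M] [Module k M] [Module A M] [IsScalarTower k A M]
    [IsSemisimpleModule A M] (hend : Module.finrank k (Module.End A M) = 1) :
    IsSimpleModule A M := by
  have : Nontrivial (Module.End A M) := Module.nontrivial_of_finrank_eq_succ hend
  have : Nontrivial M := (subsingleton_or_nontrivial M).resolve_left fun _ =>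
    not_subsingleton (Module.End A M) inferInstance
  rw [isSimpleModule_iff]
  refine ⟨fun N => ?_⟩
  obtain ⟨N', hN⟩ := exists_isCompl N
  obtain ⟨c, hc⟩ := (finrank_eq_one_iff_of_nonzero' (1 : Module.End A M) one_ne_zero).1 hend
    (N.projection N' hN)
  have hproj (x : M) : N.projection N' hN x = c • x := by rw [← hc]; rfl
  by_cases hc0 : c = 0
  · refine Or.inl ((Submodule.eq_bot_iff N).2 fun x hx => ?_)
    rw [← Submodule.projection_apply_of_mem_left hN hx, hproj, hc0, zero_smul]
  · refine Or.inr (eq_top_iff.2 fun x _ => ?_)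
    rw [← inv_smul_smul₀ hc0 x, ← hproj]
    exact N.smul_of_tower_mem _ (Submodule.projection_apply_mem hN x)

variable {k G V : Type*} [Field k] [AddCommGroup V] [Module k V]

theorem isIrreducible_of_finrank_intertwiningMap_eq_one [Group G] [Finite G]
    [NeZero (Nat.card G : k)] {ρ : Representation k G V}
    (hend : Module.finrank k (IntertwiningMap ρ ρ) = 1) : ρ.IsIrreducible := by
  rw [irreducible_iff_isSimpleModule_asModule]
  exact isSimpleModule_of_finrank_end_eq_one k
    ((IntertwiningMap.equivLinearMapAsModule ρ ρ).finrank_eq.symm.trans hend)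

theorem exists_mul_map_mul_ne_zero_s8 [Monoid G] (ρ : Representation k G V) [ρ.IsIrreducible]
    {A B : Module.End k V} (hA : A ≠ 0) (hB : B ≠ 0) : ∃ g, B * ρ g * A ≠ 0 := by
  by_contra! hzero
  let S : Subrepresentation ρ :=
    { toSubmodule := ⨅ g, LinearMap.ker (B * ρ g)
      apply_mem_toSubmodule := fun g v hv => by
        simp only [Submodule.mem_iInf, LinearMap.mem_ker] at hv ⊢
        intro h
        rw [← Module.End.mul_apply, mul_assoc, ← map_mul]
        exact hv (h * g) }
  have mem_S {v : V} : v ∈ S ↔ ∀ g, B (ρ g v) = 0 := by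
    change v ∈ ⨅ g, LinearMap.ker (B * ρ g) ↔ _
    simp
  rcases eq_bot_or_eq_top S with hS | hS
  · refine hA (LinearMap.ext fun v => ?_)
    have hv : A v ∈ S := mem_S.2 fun g => LinearMap.congr_fun (hzero g) v
    rw [hS] at hv
    exact hv
  · refine hB (LinearMap.ext fun v => ?_)
    have hv : v ∈ S := hS ▸ trivial
    simpa using mem_S.1 hv 1

end Irreducible

section IsotypicSum

variable {k G V : Type*} [CommRing k] [Group G] [Fintype G] [AddCommGroup V] [Module k V]

/-- The sum `∑ h ∈ H, ε h • ρ h`, a multiple of the projection of `ρ` onto the part on which the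
subgroup `H` acts through the sign character `ε`. -/
def isotypicSum (ρ : Representation k G V) (H : Subgroup G) (ε : G →* ℤˣ) : Module.End k V :=
  ∑ h : H, ε h • ρ h

variable (ρ : Representation k G V) {H : Subgroup G} (ε : G →* ℤˣ) {t : G}

theorem smul_map_mul_isotypicSum (ht : t ∈ H) :
    ε t • (ρ t * isotypicSum ρ H ε) = isotypicSum ρ H ε := by
  rw [isotypicSum, Finset.mul_sum, Finset.smul_sum,
    ← Equiv.sum_comp (Equiv.mulLeft (⟨t, ht⟩ : H)) fun h => ε h • ρ h]
  refine Finset.sum_congr rfl fun h _ => ?_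
  simp only [Equiv.coe_mulLeft, Subgroup.coe_mul, map_mul, mul_smul_comm, mul_smul]

theorem smul_isotypicSum_mul_map (ht : t ∈ H) :
    ε t • (isotypicSum ρ H ε * ρ t) = isotypicSum ρ H ε := by
  rw [isotypicSum, Finset.sum_mul, Finset.smul_sum,
    ← Equiv.sum_comp (Equiv.mulRight (⟨t, ht⟩ : H)) fun h => ε h • ρ h]
  refine Finset.sum_congr rfl fun h _ => ?_
  simp only [Equiv.coe_mulRight, Subgroup.coe_mul, map_mul, smul_mul_assoc, mul_comm, mul_smul]

theorem trace_isotypicSum :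
    LinearMap.trace k V (isotypicSum ρ H ε) =
      ∑ h : H, ((ε h : ℤ) : k) * LinearMap.trace k V (ρ h) := by
  simp [isotypicSum, Units.smul_def, ← zsmul_eq_mul]

end IsotypicSum

section YoungSubgroups

variable {n : ℕ}

theorem swap_mem_youngSubgroup {f : Fin n → ℕ} {i j : Fin n} (hij : f i = f j) :
    Equiv.swap i j ∈ youngSubgroup n f := by
  intro k
  rw [Equiv.swap_apply_def]
  split_ifs with hi hj
  · rw [hi, hij]
  · rw [hj, hij]
  · rfl

theorem injective_prod_of_isotypicSum_mul_ne_zero {k V : Type*} [Field k] [CharZero k]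
    [AddCommGroup V] [Module k V] (ρ : Representation k (Equiv.Perm (Fin n)) V)
    {f f' : Fin n → ℕ} {g : Equiv.Perm (Fin n)}
    (hg : isotypicSum ρ (youngSubgroup n f') Equiv.Perm.sign * ρ g *
      isotypicSum ρ (youngSubgroup n f) 1 ≠ 0) :
    Function.Injective fun i => (f i, f' (g i)) := by
  intro i j hij
  obtain ⟨hf, hf'⟩ : f i = f j ∧ f' (g i) = f' (g j) := Prod.mk.inj hij
  by_contra hne
  have : IsAddTorsionFree (Module.End k V) := .of_isTorsionFree k _
  set A := isotypicSum ρ (youngSubgroup n f) 1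
  set B := isotypicSum ρ (youngSubgroup n f') Equiv.Perm.sign
  have hA : ρ (Equiv.swap i j) * A = A := by
    simpa using smul_map_mul_isotypicSum ρ 1 (swap_mem_youngSubgroup hf)
  have hB : B * ρ (Equiv.swap (g i) (g j)) = -B := by
    have := smul_isotypicSum_mul_map ρ Equiv.Perm.sign (swap_mem_youngSubgroup hf')
    rw [Equiv.Perm.sign_swap (g.injective.ne hne)] at this
    simpa [neg_eq_iff_eq_neg] using this
  refine hg (self_eq_neg.1 ?_)
  calc B * ρ g * A = B * ρ (g * Equiv.swap i j) * A := by
        rw [map_mul, mul_assoc, mul_assoc, mul_assoc, hA]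
    _ = B * ρ (Equiv.swap (g i) (g j)) * ρ g * A := by
        rw [Equiv.mul_swap_eq_swap_mul, map_mul, ← mul_assoc B]
    _ = -(B * ρ g * A) := by rw [hB, neg_mul, neg_mul]

theorem pairS_indCF {a : Equiv.Perm (Fin n) → ℚ} (ha : ∀ w w', IsConj w w' → a w = a w')
    (H : Subgroup (Equiv.Perm (Fin n))) (φ : Equiv.Perm (Fin n) → ℚ) :
    pairS n a (indCF H φ) = (Nat.card H : ℚ)⁻¹ * ∑ h : H, a h * φ h := by
  have hconj (g : Equiv.Perm (Fin n)) :
      ∑ w, a w * (if g⁻¹ * w * g ∈ H then φ (g⁻¹ * w * g) else 0) = ∑ h : H, a h * φ h := by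
    calc _ = ∑ w, a w * (if w ∈ H then φ w else 0) := by
          rw [← Equiv.sum_comp (MulAut.conj g).toEquiv]
          refine Finset.sum_congr rfl fun w _ => ?_
          have hw : a (g * w * g⁻¹) = a w := ha _ _ (isConj_iff.2 ⟨g⁻¹, by group⟩)
          have hgw : g⁻¹ * (g * w * g⁻¹) * g = w := by group
          simp only [MulEquiv.toEquiv_eq_coe, EquivLike.coe_coe, MulAut.conj_apply, hw, hgw]
      _ = ∑ h : H, a h * φ h := by
          simp only [mul_ite, mul_zero, ← Finset.sum_filter]
          exact Finset.sum_subtype _ (by simp) _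
  calc pairS n a (indCF H φ)
      = (n.factorial : ℚ)⁻¹ * ((Nat.card H : ℚ)⁻¹ * ∑ g : Equiv.Perm (Fin n),
          ∑ w, a w * (if g⁻¹ * w * g ∈ H then φ (g⁻¹ * w * g) else 0)) := by
        rw [Finset.sum_comm]
        simp only [pairS, indCF, Finset.mul_sum, mul_left_comm]
    _ = (Nat.card H : ℚ)⁻¹ * ∑ h : H, a h * φ h := by
        simp only [hconj, Finset.sum_const, Finset.card_univ, Fintype.card_perm, Fintype.card_fin,
          nsmul_eq_mul]
        field_simp

end YoungSubgroups

section Partitions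

open Finset

/-- The number of cells in the first `t` columns of the Young diagram with row lengths `m`. -/
def cardFirstColumns (m : Multiset ℕ) (t : ℕ) : ℕ :=
  (m.map (min · t)).sum

theorem cardFirstColumns_eq_sum_card_filter (m : Multiset ℕ) (t : ℕ) :
    cardFirstColumns m t = ∑ j ∈ range t, (m.filter (j < ·)).card := by
  induction m using Multiset.induction_on with
  | empty => simp [cardFirstColumns]
  | cons a m ih =>
    have hrow : ∑ j ∈ range t, (if j < a then 1 else 0) = min a t := by
      rw [← sum_filter, ← card_eq_sum_ones, ← card_range (min a t)]
      congr 1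
      grind
    have hcons (j : ℕ) : ((a ::ₘ m).filter (j < ·)).card =
        (if j < a then 1 else 0) + (m.filter (j < ·)).card := by
      rw [← Multiset.countP_eq_card_filter, ← Multiset.countP_eq_card_filter,
        Multiset.countP_cons, add_comm]
    simp only [hcons, sum_add_distrib, hrow, ← ih, cardFirstColumns, Multiset.map_cons,
      Multiset.sum_cons]

theorem count_add_one_add_card_filter_lt (m : Multiset ℕ) (t : ℕ) :
    m.count (t + 1) + (m.filter (t + 1 < ·)).card = (m.filter (t < ·)).card := by
  induction m using Multiset.induction_on with
  | empty => simp
  | cons a m ih =>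
    simp only [← Multiset.countP_eq_card_filter, Multiset.countP_cons, Multiset.count_cons] at ih ⊢
    grind

theorem eq_of_cardFirstColumns_eq {m m' : Multiset ℕ} (hm : 0 ∉ m) (hm' : 0 ∉ m')
    (h : cardFirstColumns m = cardFirstColumns m') : m = m' := by
  have hfilter (t : ℕ) : (m.filter (t < ·)).card = (m'.filter (t < ·)).card := by
    have ht := congrFun h t
    have ht' := congrFun h (t + 1)
    simp only [cardFirstColumns_eq_sum_card_filter, sum_range_succ] at ht ht'
    lia
  refine Multiset.ext.2 fun k => ?_
  cases k with
  | zero => rw [Multiset.count_eq_zero_of_notMem hm, Multiset.count_eq_zero_of_notMem hm']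
  | succ k =>
    have hk := count_add_one_add_card_filter_lt m k
    have hk' := count_add_one_add_card_filter_lt m' k
    rw [hfilter, hfilter] at hk
    lia

theorem card_filter_lt_le_cardFirstColumns {n : ℕ} {f f' : Fin n → ℕ}
    (h : Function.Injective fun i => (f i, f' i)) (t : ℕ) :
    #{i | f' i < t} ≤ cardFirstColumns (fiberSizes n f) t := by
  calc #{i | f' i < t} = ∑ a ∈ univ.image f, #{i ∈ univ.filter (f' · < t) | f i = a} :=
        card_eq_sum_card_fiberwise fun i _ => mem_image_of_mem f (mem_univ i)
    _ ≤ ∑ a ∈ univ.image f, min #{i | f i = a} t := by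
        refine sum_le_sum fun a _ => le_min (card_le_card fun i hi => ?_) ?_
        · exact mem_filter.2 ⟨mem_univ i, (mem_filter.1 hi).2⟩
        · refine (card_le_card_of_injOn f' (t := range t) ?_ ?_).trans_eq (card_range t)
          · exact fun i hi => by simpa using (mem_filter.1 hi).1
          · exact fun i hi j hj hij =>
              h (Prod.ext ((mem_filter.1 hi).2.trans (mem_filter.1 hj).2.symm) hij)
    _ = cardFirstColumns (fiberSizes n f) t := by
        rw [cardFirstColumns, fiberSizes, Multiset.map_map]
        rfl

theorem exists_card_filter_eq {ι α : Type*} [Fintype ι] [Fintype α] (c : ι → ℕ)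
    (hc : ∑ j, c j = Fintype.card α) : ∃ f : α → ι, ∀ j, #{i | f i = j} = c j := by
  have hcard : Fintype.card α = Fintype.card (Σ j, Fin (c j)) := by simp [hc]
  let e := Fintype.equivOfCardEq hcard
  refine ⟨fun i => (e i).1, fun j => ?_⟩
  calc #{i | (e i).1 = j} = Fintype.card {i // (e i).1 = j} := (Fintype.card_subtype _).symm
    _ = Fintype.card {x : Σ j, Fin (c j) // x.1 = j} :=
        Fintype.card_congr (e.subtypeEquiv fun _ => Iff.rfl)
    _ = c j := by
        rw [Fintype.card_congr (Equiv.sigmaSubtype j), Fintype.card_fin]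

theorem fiberSizes_comp_embedding {n : ℕ} {ι : Type*} [Fintype ι] (f : Fin n → ι) (e : ι ↪ ℕ) :
    fiberSizes n (e ∘ f) =
      ((univ : Finset ι).val.map fun j => #{i | f i = j}).filter (0 < ·) := by
  have himage : univ.image (e ∘ f) = (univ.filter fun j => 0 < #{i | f i = j}).map e := by
    ext k
    simp [card_pos, Finset.Nonempty]
  rw [fiberSizes, himage, map_val, Multiset.map_map, Multiset.filter_map, filter_val]
  refine Multiset.map_congr rfl fun j _ => ?_
  simp

theorem exists_fiberSizes_eq_parts {n : ℕ} (lam : n.Partition) :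
    ∃ f, fiberSizes n f = lam.parts := by
  have hval : (univ : Finset lam.parts.ToType).val.map (·.1) = lam.parts :=
    Multiset.map_univ_coe lam.parts
  obtain ⟨f, hf⟩ := exists_card_filter_eq (α := Fin n) (fun j : lam.parts.ToType => j.1) (by
    rw [Fintype.card_fin]
    exact (congrArg Multiset.sum hval).trans lam.parts_sum)
  let e : lam.parts.ToType ↪ ℕ := (Fintype.equivFin _).toEmbedding.trans Fin.valEmbedding
  refine ⟨e ∘ f, ?_⟩
  rw [fiberSizes_comp_embedding]
  simp only [hf]
  rw [hval]
  exact Multiset.filter_eq_self.2 fun a ha => lam.parts_pos ha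

theorem exists_fiberSizes_eq_conjParts {n : ℕ} (lam : n.Partition) :
    ∃ f, fiberSizes n f = conjParts n lam.parts ∧
      ∀ t, #{i | f i < t} = cardFirstColumns lam.parts t := by
  have hcolumns : ∑ j : Fin n, (lam.parts.filter ((j : ℕ) < ·)).card = Fintype.card (Fin n) := by
    rw [Fin.sum_univ_eq_sum_range fun j => (lam.parts.filter (j < ·)).card,
      ← cardFirstColumns_eq_sum_card_filter, Fintype.card_fin]
    calc cardFirstColumns lam.parts n = (lam.parts.map id).sum :=
          congrArg Multiset.sum <|
            Multiset.map_congr rfl fun a ha => min_eq_left (lam.le_of_mem_parts ha)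
      _ = n := by rw [Multiset.map_id, lam.parts_sum]
  obtain ⟨f, hf⟩ := exists_card_filter_eq _ hcolumns
  refine ⟨Fin.valEmbedding ∘ f, ?_, fun t => ?_⟩
  · rw [fiberSizes_comp_embedding, conjParts, ← Nat.Iio_eq_range, ← Fin.map_valEmbedding_univ,
      map_val, Multiset.map_map]
    simp only [hf]
    rfl
  · have hfiber (j : ℕ) : #{i | (f i : ℕ) = j} = (lam.parts.filter (j < ·)).card := by
      by_cases hj : j < n
      · rw [← hf ⟨j, hj⟩]
        simp only [Fin.ext_iff]
      · rw [filter_eq_empty_iff.2 fun i _ => by lia, card_empty, Multiset.filter_eq_nil.2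
          fun a ha => by have := lam.le_of_mem_parts ha; lia, Multiset.card_zero]
    rw [cardFirstColumns_eq_sum_card_filter, card_eq_sum_card_fiberwise (f := fun i => (f i : ℕ))
      (t := range t) fun i hi => by simpa using hi]
    refine sum_congr rfl fun j hj => ?_
    rw [← hfiber, filter_filter]
    refine congrArg card (filter_congr fun i _ => and_iff_right_of_imp ?_)
    rintro rfl
    exact mem_range.1 hj

end Partitions

section IrreducibleCharacters

variable {n : ℕ} {κ κT ν νT : Multiset ℕ} {χ ψ : Equiv.Perm (Fin n) → ℤ}

open Representation in
theorem cast_pairS_eq_of_character {V W : Type*} [AddCommGroup V] [Module ℂ V] [AddCommGroup W]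
    [Module ℂ W] {ρ : Representation ℂ (Equiv.Perm (Fin n)) V}
    {τ : Representation ℂ (Equiv.Perm (Fin n)) W}
    (hρ : ∀ g, ρ.character g = χ g) (hτ : ∀ g, τ.character g = ψ g) :
    (pairS n (fun w => (χ w : ℚ)) (fun w => (ψ w : ℚ)) : ℂ) =
      (Nat.card (Equiv.Perm (Fin n)) : ℂ)⁻¹ * ∑ g, ρ.character g * τ.character g⁻¹ := by
  have hinv (g : Equiv.Perm (Fin n)) : τ.character g⁻¹ = τ.character g := by
    obtain ⟨h, hh⟩ := isConj_iff.1
      (Equiv.Perm.isConj_iff_cycleType_eq.2 (Equiv.Perm.cycleType_inv g).symm)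
    rw [← hh, char_conj]
  simp only [pairS, hinv, hρ, hτ, Nat.card_perm, Nat.card_fin]
  push_cast
  rfl

theorem IsIrrCharOf.exists_isIrreducible (hχ : IsIrrCharOf n κ κT χ) :
    ∃ V : FDRep ℂ (Equiv.Perm (Fin n)),
      Representation.IsIrreducible V.ρ ∧ ∀ g, V.character g = χ g := by
  obtain ⟨⟨V, hV⟩, hnorm, -⟩ := hχ
  refine ⟨V, isIrreducible_of_finrank_intertwiningMap_eq_one ?_, hV⟩
  have := invertibleOfNonzero (NeZero.ne (Nat.card (Equiv.Perm (Fin n)) : ℂ))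
  have hfinrank := Representation.card_inv_mul_sum_char_mul_char_eq_finrank V.ρ V.ρ
  rw [← cast_pairS_eq_of_character hV hV, hnorm] at hfinrank
  exact_mod_cast hfinrank.symm

theorem eq_of_isConj_of_character {V : Type*} [AddCommGroup V] [Module ℂ V]
    {ρ : Representation ℂ (Equiv.Perm (Fin n)) V} (hρ : ∀ g, ρ.character g = χ g)
    {w w' : Equiv.Perm (Fin n)} (h : IsConj w w') : χ w = χ w' := by
  obtain ⟨g, rfl⟩ := isConj_iff.1 h
  exact_mod_cast (hρ w).symm.trans ((ρ.char_conj w g).symm.trans (hρ _))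

theorem IsIrrCharOf.eq_of_isConj (hχ : IsIrrCharOf n κ κT χ) {w w' : Equiv.Perm (Fin n)}
    (h : IsConj w w') : χ w = χ w' := by
  obtain ⟨V, hV⟩ := hχ.1
  exact eq_of_isConj_of_character hV h

theorem IsIrrCharOf.eq_of_pairS_ne_zero (hχ : IsIrrCharOf n κ κT χ)
    (hψ : IsIrrCharOf n ν νT ψ)
    (h : pairS n (fun w => (χ w : ℚ)) (fun w => (ψ w : ℚ)) ≠ 0) : χ = ψ := by
  obtain ⟨V, _, hV⟩ := hχ.exists_isIrreducible
  obtain ⟨W, _, hW⟩ := hψ.exists_isIrreducible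
  have := invertibleOfNonzero (NeZero.ne (Nat.card (Equiv.Perm (Fin n)) : ℂ))
  have horth := Representation.char_orthonormal V.ρ W.ρ
  rw [← cast_pairS_eq_of_character hV hW] at horth
  have hiso : Nonempty (Representation.Equiv W.ρ V.ρ) := by
    by_contra hiso
    rw [if_neg hiso] at horth
    exact h (by exact_mod_cast horth)
  obtain ⟨e⟩ := hiso
  have hchar (g : Equiv.Perm (Fin n)) : V.character g = W.character g :=
    (congrFun (Representation.char_iso e) g).symm
  funext g
  exact_mod_cast (hV g).symm.trans ((hchar g).trans (hW g))

theorem isotypicSum_ne_zero_of_pairS_indCF_ne_zero {V : Type*} [AddCommGroup V] [Module ℂ V]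
    {ρ : Representation ℂ (Equiv.Perm (Fin n)) V} (hρ : ∀ g, ρ.character g = χ g)
    (H : Subgroup (Equiv.Perm (Fin n)))
    {ε : Equiv.Perm (Fin n) →* ℤˣ}
    (h : pairS n (fun w => (χ w : ℚ)) (indCF H fun w => ((ε w : ℤ) : ℚ)) ≠ 0) :
    isotypicSum ρ H ε ≠ 0 := by
  intro hzero
  have htrace : ∑ g : H, ((ε g : ℤ) : ℂ) * χ g = 0 := by
    simpa only [hzero, map_zero, ← hρ, Representation.character] using
      (trace_isotypicSum ρ ε (H := H)).symm
  refine h ?_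
  rw [pairS_indCF fun w w' hw => congrArg Int.cast (eq_of_isConj_of_character hρ hw)]
  simp only [mul_comm (Int.cast (χ _))]
  exact mul_eq_zero_of_right _ (by exact_mod_cast htrace)

theorem IsIrrCharOf.cardFirstColumns_le {lam mu : n.Partition}
    (hlam : IsIrrCharOf n lam.parts κT χ)
    (hmu : IsIrrCharOf n ν (conjParts n mu.parts) χ) (t : ℕ) :
    cardFirstColumns mu.parts t ≤ cardFirstColumns lam.parts t := by
  obtain ⟨V, _, hV⟩ := hlam.exists_isIrreducible
  obtain ⟨f, hf⟩ := exists_fiberSizes_eq_parts lam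
  obtain ⟨f', hf', hcolumns⟩ := exists_fiberSizes_eq_conjParts mu
  have hsymm : isotypicSum V.ρ (youngSubgroup n f) 1 ≠ 0 :=
    isotypicSum_ne_zero_of_pairS_indCF_ne_zero hV _ (by simpa using hlam.2.2.1 f hf)
  have halt : isotypicSum V.ρ (youngSubgroup n f') Equiv.Perm.sign ≠ 0 :=
    isotypicSum_ne_zero_of_pairS_indCF_ne_zero hV _ (hmu.2.2.2 f' hf')
  obtain ⟨g, hg⟩ := exists_mul_map_mul_ne_zero_s8 V.ρ hsymm halt
  calc cardFirstColumns mu.parts t = Finset.card {i | f' i < t} := (hcolumns t).symm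
    _ = Finset.card {i | f' (g i) < t} :=
        (Finset.card_equiv g (by simp)).symm
    _ ≤ cardFirstColumns (fiberSizes n f) t :=
        card_filter_lt_le_cardFirstColumns (injective_prod_of_isotypicSum_mul_ne_zero V.ρ hg) t
    _ = cardFirstColumns lam.parts t := by rw [hf]

theorem pairS_eq_ite {χ : n.Partition → Equiv.Perm (Fin n) → ℤ}
    (hχ : ∀ lam, IsIrrCharOf n lam.parts (conjParts n lam.parts) (χ lam)) (lam mu : n.Partition) :
    pairS n (fun w => (χ lam w : ℚ)) (fun w => (χ mu w : ℚ)) = if lam = mu then 1 else 0 := by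
  split_ifs with h
  · rw [← h]
    exact (hχ lam).2.1
  · by_contra hpair
    have hlam : IsIrrCharOf n lam.parts (conjParts n lam.parts) (χ mu) :=
      (hχ lam).eq_of_pairS_ne_zero (hχ mu) hpair ▸ hχ lam
    refine h (Nat.Partition.ext (eq_of_cardFirstColumns_eq ?_ ?_ (funext fun t => le_antisymm
      ((hχ mu).cardFirstColumns_le hlam t) (hlam.cardFirstColumns_le (hχ mu) t))))
    · exact fun h0 => (lam.parts_pos h0).false
    · exact fun h0 => (mu.parts_pos h0).false

end IrreducibleCharacters

section ClassFunctions

theorem exists_eq_sum_of_card_conjClasses_le {k G ι : Type*} [Field k] [Group G] [Finite G]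
    [Fintype ι] {χ : ι → G → k} (hχ : ∀ i g h, IsConj g h → χ i g = χ i h)
    (hind : LinearIndependent k χ) (hcard : Nat.card (ConjClasses G) ≤ Nat.card ι)
    {φ : G → k} (hφ : ∀ g h, IsConj g h → φ g = φ h) : ∃ c : ι → k, φ = ∑ i, c i • χ i := by
  have := Fintype.ofFinite (ConjClasses G)
  let W : Submodule k (G → k) := LinearMap.range (LinearMap.funLeft k k (ConjClasses.mk : G → _))
  have hmem {ψ : G → k} (hψ : ∀ g h, IsConj g h → ψ g = ψ h) : ψ ∈ W :=
    ⟨Quotient.lift ψ hψ, rfl⟩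
  have hW : Module.finrank k W ≤ Fintype.card ι :=
    (LinearMap.finrank_range_le _).trans <| by
      simpa only [Module.finrank_fintype_fun_eq_card, Nat.card_eq_fintype_card] using hcard
  have hspan : Submodule.span k (Set.range χ) = W :=
    Submodule.eq_of_le_of_finrank_le (Submodule.span_le.2 (Set.range_subset_iff.2 fun i =>
      hmem (hχ i))) (hW.trans_eq (finrank_span_eq_card hind).symm)
  obtain ⟨c, hc⟩ := (Submodule.mem_span_range_iff_exists_fun k).1 (hspan ▸ hmem hφ)
  exact ⟨c, hc.symm⟩

theorem card_conjClasses_perm_le (α : Type*) [Fintype α] :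
    Nat.card (ConjClasses (Equiv.Perm α)) ≤ Nat.card (Fintype.card α).Partition := by
  let partition : ConjClasses (Equiv.Perm α) → (Fintype.card α).Partition :=
    Quotient.lift Equiv.Perm.partition fun _ _ => Equiv.Perm.partition_eq_of_isConj.1
  refine Nat.card_le_card_of_injective partition fun c c' => ?_
  refine Quotient.inductionOn₂ c c' fun w w' h => ?_
  exact Quotient.sound (Equiv.Perm.partition_eq_of_isConj.2 h)

theorem exists_eq_sum_irreducible {n : ℕ} {χ : n.Partition → Equiv.Perm (Fin n) → ℤ}
    (hχ : ∀ lam, IsIrrCharOf n lam.parts (conjParts n lam.parts) (χ lam))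
    {φ : Equiv.Perm (Fin n) → ℚ} (hφ : ∀ w w', IsConj w w' → φ w = φ w') :
    ∃ c : n.Partition → ℚ, ∀ w, φ w = ∑ lam, c lam * χ lam w := by
  have hind : LinearIndependent ℚ fun lam w => (χ lam w : ℚ) := by
    have hdot (lam mu : n.Partition) : (fun w => (χ lam w : ℚ)) ⬝ᵥ (fun w => (χ mu w : ℚ)) =
        n.factorial * if lam = mu then 1 else 0 := by
      rw [← pairS_eq_ite hχ, pairS, mul_inv_cancel_left₀ (by positivity)]
      rfl
    refine LinearMap.linearIndependent_of_isOrthoᵢ (B := dotProductBilin ℚ ℚ) ?_ fun lam => ?_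
    · exact LinearMap.isOrthoᵢ_def.2 fun lam mu h =>
        (hdot lam mu).trans (by rw [if_neg h, mul_zero])
    · exact (hdot lam lam).trans_ne (by simp [Nat.factorial_ne_zero])
  obtain ⟨c, hc⟩ := exists_eq_sum_of_card_conjClasses_le
    (fun lam w w' h => congrArg Int.cast ((hχ lam).eq_of_isConj h)) hind
    (by simpa using card_conjClasses_perm_le (Fin n)) hφ
  exact ⟨c, fun w => by simp [hc]⟩

end ClassFunctions

theorem statement8 (n : ℕ)
    (χ : Nat.Partition n → (Equiv.Perm (Fin n) → ℤ))
    (hχ : ∀ lam : Nat.Partition n, IsIrrCharOf n lam.parts (conjParts n lam.parts) (χ lam)) :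
    -- the map is an isometry: the elliptic pairing of the pullbacks [λ×∅]
    -- equals the character pairing on S_n …
    (∀ lam mu : Nat.Partition n,
        ellB n (fun p => ((χ lam) p.1 : ℚ)) (fun p => ((χ mu) p.1 : ℚ))
          = pairS n (fun w => ((χ lam) w : ℚ)) (fun w => ((χ mu) w : ℚ))) ∧
    -- … and the [λ×∅] are orthonormal …
    (∀ lam mu : Nat.Partition n,
        ellB n (fun p => ((χ lam) p.1 : ℚ)) (fun p => ((χ mu) p.1 : ℚ))
          = if lam = mu then 1 else 0) ∧
    -- … and they span the space of virtual elliptic representations: every class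
    -- function on W(B_n) is congruent, modulo the radical of the elliptic pairing,
    -- to a linear combination of the [λ×∅].  (Together with orthonormality this says
    -- σ_λ ↦ [λ×∅] induces an isometric isomorphism R(S_n) ≅ R̄(W(B_n)).)
    (∀ σ : BElt n → ℚ, IsClassFnB n σ →
        ∃ c : Nat.Partition n → ℚ,
          InRadicalB n (fun p => σ p - ∑ lam : Nat.Partition n, c lam * ((χ lam) p.1 : ℚ))) := by
  have hisometry (lam mu : n.Partition) :=
    ellB_comp_fst (fun w => (χ lam w : ℚ)) (fun w => (χ mu w : ℚ))
  refine ⟨hisometry, fun lam mu => (hisometry lam mu).trans (pairS_eq_ite hχ lam mu),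
    fun σ hσ => ?_⟩
  obtain ⟨φ, hφ, hσφ⟩ := hσ.exists_eq_comp_fst
  obtain ⟨c, hc⟩ := exists_eq_sum_irreducible hχ hφ
  refine ⟨c, inRadicalB_of_forall_isElliptic (fun p q hpq => ?_) fun p hp => ?_⟩
  · simp only [hσ p q hpq, ← hc, hφ _ _ hpq.isConj]
  · simp only [hσφ p hp, ← hc, sub_self]
end
end
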